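/- arXiv:1808.02991 — 12 statements merged into one kernel-verified Lean document; each statement's English description precedes it below -/
import Mathlib

section
/- Let L be a finite-dimensional Lie algebra of dimension s over a field of characteristic different from 2 and 3, and let 0 → S → T →γ L → 0 be a stem extension of L. Then both S and T are finite-dimensional and dim S ≤ s(s−1)/2 + s (hence dim T ≤ s(s−1)/2 + 2s). -/
/-- **Lemma 2.2(1), purely even case.**
If `L` is a finite-dimensional Lie algebra of dimension `s` over a field of
characteristic different from `2` and `3`, and `0 → S → T → L → 0` is a stem
extension of `L` (i.e. `γ : T → L` is surjective with kernel `S`, `S` is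
contained in the center of `T` and in the derived subalgebra `[T,T]`), then
`S` and `T` are finite-dimensional, `dim S ≤ s(s-1)/2 + s` and
`dim T ≤ s(s-1)/2 + 2s`. -/
theorem stmt_0 (K : Type*) [Field K] (h2 : (2 : K) ≠ 0) (h3 : (3 : K) ≠ 0)
    (L T : Type*) [LieRing L] [LieAlgebra K L] [LieRing T] [LieAlgebra K T]
    [FiniteDimensional K L]
    (γ : T →ₗ⁅K⁆ L) (hsurj : Function.Surjective γ)
    (S : LieIdeal K T) (hker : γ.ker = S)
    (hcentral : S ≤ LieAlgebra.center K T)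
    (hstem : S ≤ LieAlgebra.derivedSeries K T 1) :
    FiniteDimensional K S ∧ FiniteDimensional K T ∧
      Module.finrank K S ≤
        Module.finrank K L * (Module.finrank K L - 1) / 2 + Module.finrank K L ∧
      Module.finrank K T ≤
        Module.finrank K L * (Module.finrank K L - 1) / 2 + 2 * Module.finrank K L := by
  classical
  set n := Module.finrank K L with hn
  let b := Module.finBasis K L
  choose g hg using hsurj
  let t : Fin n → T := fun i => g (b i)
  have hz : ∀ z : T, γ z = 0 → ∀ y : T, ⁅z, y⁆ = 0 ∧ ⁅y, z⁆ = 0 := by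
    intro z hz y
    have h1 : z ∈ S := by rw [← hker]; exact (LieHom.mem_ker (f := γ) (x := z)).2 hz
    have h4 : ⁅y, z⁆ = 0 := (LieModule.mem_maxTrivSubmodule K T T z).1 (hcentral h1) y
    exact ⟨by rw [← lie_skew, h4, neg_zero], h4⟩
  let f : (Σ i : Fin n, Fin i.val) → T := fun p => ⁅t p.1, t ⟨p.2.val, p.2.isLt.trans p.1.isLt⟩⁆
  let W : Submodule K T := Submodule.span K (Set.range f)
  have hlt : ∀ i j : Fin n, j < i → ⁅t i, t j⁆ ∈ W := fun i j hij =>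
    Submodule.subset_span ⟨⟨i, ⟨j.val, hij⟩⟩, rfl⟩
  have hW : ∀ i j : Fin n, ⁅t i, t j⁆ ∈ W := by
    intro i j
    rcases lt_trichotomy i j with h | h | h
    · rw [← lie_skew]; exact W.neg_mem (hlt j i h)
    · subst h; rw [lie_self]; exact W.zero_mem
    · exact hlt i j h
  let c : T → T := fun x => ∑ i, b.repr (γ x) i • t i
  have hc : ∀ x, γ (x - c x) = 0 := by
    intro x
    have h5 : γ (c x) = γ x := by
      conv_rhs => rw [← b.sum_repr (γ x)]
      simp only [c, t, map_sum, map_smul, hg]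
    rw [map_sub, h5, sub_self]
  have hbr : ∀ x y : T, ⁅x, y⁆ ∈ W := by
    intro x y
    have e1 : ⁅x, y⁆ = ⁅c x, y⁆ := by
      have := (hz _ (hc x) y).1
      rwa [sub_lie, sub_eq_zero] at this
    have e2 : ⁅c x, y⁆ = ⁅c x, c y⁆ := by
      have := (hz _ (hc y) (c x)).2
      rwa [lie_sub, sub_eq_zero] at this
    rw [e1, e2]
    simp only [c, sum_lie, lie_sum, smul_lie, lie_smul]
    exact W.sum_mem fun i _ => W.smul_mem _ (W.sum_mem fun j _ => W.smul_mem _ (hW _ _))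
  have hSW : S.toSubmodule ≤ W := by
    intro x hx
    have h6 := hstem hx
    rw [LieAlgebra.derivedSeries_def, LieAlgebra.derivedSeriesOfIdeal_succ,
      LieAlgebra.derivedSeriesOfIdeal_zero, ← LieSubmodule.mem_toSubmodule,
      LieSubmodule.lieIdeal_oper_eq_linear_span'] at h6
    refine Submodule.span_le.2 ?_ h6
    rintro _ ⟨x, -, y, -, rfl⟩
    exact hbr x y
  have hWfin : FiniteDimensional K W := FiniteDimensional.span_of_finite K (Set.finite_range f)
  have hWr : Module.finrank K W ≤ n * (n - 1) / 2 := by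
    refine (finrank_range_le_card f).trans (le_of_eq ?_)
    rw [Fintype.card_sigma]
    simp only [Fintype.card_fin]
    rw [Fin.sum_univ_eq_sum_range (fun i => i) n, Finset.sum_range_id]
  have hSfin : FiniteDimensional K S.toSubmodule := Submodule.finiteDimensional_of_le hSW
  have hSr : Module.finrank K S.toSubmodule ≤ n * (n - 1) / 2 :=
    (Submodule.finrank_mono hSW).trans hWr
  have hk : LinearMap.ker (γ : T →ₗ[K] L) = S.toSubmodule := by
    rw [← hker]; rfl
  have hgs : Function.Surjective (γ : T →ₗ[K] L) := fun y => ⟨g y, hg y⟩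
  have hkfin : FiniteDimensional K (LinearMap.ker (γ : T →ₗ[K] L)) := by rw [hk]; exact hSfin
  have hT : FiniteDimensional K T := by
    have : FiniteDimensional K (T ⧸ LinearMap.ker (γ : T →ₗ[K] L)) :=
      ((γ : T →ₗ[K] L).quotKerEquivOfSurjective hgs).symm.finiteDimensional
    exact Module.Finite.of_submodule_quotient (LinearMap.ker (γ : T →ₗ[K] L))
  have hr := (γ : T →ₗ[K] L).finrank_range_add_finrank_ker
  rw [LinearMap.range_eq_top.2 hgs, finrank_top, hk] at hr
  refine ⟨hSfin, hT, ?_, ?_⟩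
  · exact hSr.trans (Nat.le_add_right _ _)
  · omega
end

section
/- Let L be a finite-dimensional Lie algebra over a field of characteristic different from 2 and 3, let 0 → A → B →β L → 0 be an extension of L and let 0 → S → T →γ L → 0 be a stem extension of L. Then every Lie algebra homomorphism f : B → T satisfying γ ∘ f = β is surjective. -/
/-- **Lemma 2.2(3), purely even case.**
Let `L` be a finite-dimensional Lie algebra over a field of characteristic
different from `2` and `3`, let `0 → A → B → L → 0` be an extension of `L`
and let `0 → S → T → L → 0` be a stem extension of `L`.  Then every Lie
algebra homomorphism `f : B → T` with `γ ∘ f = β` is surjective. -/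
theorem stmt_2 (K : Type*) [Field K] (h2 : (2 : K) ≠ 0) (h3 : (3 : K) ≠ 0)
    (L B T : Type*) [LieRing L] [LieAlgebra K L] [LieRing B] [LieAlgebra K B]
    [LieRing T] [LieAlgebra K T] [FiniteDimensional K L]
    (β : B →ₗ⁅K⁆ L) (hβ : Function.Surjective β)
    (A : LieIdeal K B) (hA : β.ker = A)
    (γ : T →ₗ⁅K⁆ L) (hγ : Function.Surjective γ)
    (S : LieIdeal K T) (hS : γ.ker = S)
    (hcentral : S ≤ LieAlgebra.center K T)
    (hstem : S ≤ LieAlgebra.derivedSeries K T 1)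
    (f : B →ₗ⁅K⁆ T) (hf : γ.comp f = β) :
    Function.Surjective f := by
  have key : ∀ t : T, ∃ b : B, ∃ s ∈ S, t = f b + s := by
    intro t
    obtain ⟨b, hb⟩ := hβ (γ t)
    refine ⟨b, t - f b, ?_, by abel⟩
    rw [← hS, LieHom.mem_ker, map_sub, sub_eq_zero, ← hb, ← hf]
    rfl
  have hc : ∀ s ∈ S, ∀ x : T, ⁅x, s⁆ = 0 := fun s hs x =>
    (LieModule.mem_maxTrivSubmodule K T T s).1 (hcentral hs) x
  have hder : ∀ x ∈ LieAlgebra.derivedSeries K T 1, x ∈ f.range := by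
    intro x hx
    have hx' : x ∈ (⁅(⊤ : LieIdeal K T), (⊤ : LieIdeal K T)⁆ : LieIdeal K T) := hx
    rw [← LieSubmodule.mem_toSubmodule,
      LieSubmodule.lieIdeal_oper_eq_linear_span'] at hx'
    clear hx
    induction hx' using Submodule.span_induction with
    | mem y hy =>
      obtain ⟨u, -, v, -, rfl⟩ := hy
      obtain ⟨b, s, hs, rfl⟩ := key u
      obtain ⟨c, r, hr, rfl⟩ := key v
      refine (LieHom.mem_range f _).2 ⟨⁅b, c⁆, ?_⟩
      have h1 : ⁅s, f c⁆ = 0 := by rw [← lie_skew, hc s hs, neg_zero]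
      rw [lie_add, hc r hr, add_zero, add_lie, h1, add_zero, LieHom.map_lie]
    | zero => exact zero_mem _
    | add y z _ _ hy hz => exact add_mem hy hz
    | smul a y _ hy => exact f.range.smul_mem a hy
  intro t
  obtain ⟨b, s, hs, rfl⟩ := key t
  obtain ⟨c, hc'⟩ := (LieHom.mem_range f _).1 (hder s (hstem hs))
  exact ⟨b + c, by rw [map_add, hc']⟩
end

section
/- Let 0 → A → B →β L → 0 be an extension of Lie algebras over a field of characteristic different from 2 and 3 and let X be a stem denominator of this extension. Then the induced extension 0 → A/X → B/X →β̄ L → 0 is a stem extension of L, i.e. A/X ⊆ Z(B/X) and A/X ⊆ [B/X, B/X]. -/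
/-- The canonical quotient map `L → L ⧸ I` as a morphism of Lie algebras. -/
def LieIdeal.quotMk {R L : Type*} [CommRing R] [LieRing L] [LieAlgebra R L]
    (I : LieIdeal R L) : L →ₗ⁅R⁆ L ⧸ I :=
  { I.toSubmodule.mkQ with map_lie' := fun {_ _} => rfl }

/-- **Proposition 2.3(2), first part, purely even case.**
Let `0 → A → B → L → 0` be an extension of Lie algebras over a field of
characteristic different from `2` and `3` and let `X` be a stem denominator of
this extension.  Then the induced extension `0 → A/X → B/X → L → 0` is a stem
extension of `L`: the image `A/X` of `A` in `B/X` is contained in the center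
of `B/X` and in the derived subalgebra `[B/X, B/X]`. -/
theorem stmt_4 (K : Type*) [Field K] (h2 : (2 : K) ≠ 0) (h3 : (3 : K) ≠ 0)
    (L B : Type*) [LieRing L] [LieAlgebra K L] [LieRing B] [LieAlgebra K B]
    (β : B →ₗ⁅K⁆ L) (hβ : Function.Surjective β)
    (A : LieIdeal K B) (hA : β.ker = A)
    (X : LieIdeal K B)
    (hXlow : ⁅A, (⊤ : LieIdeal K B)⁆ ≤ X) (hXhigh : X ≤ A)
    (hsum : A = (A ⊓ LieAlgebra.derivedSeries K B 1) ⊔ X)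
    (hint : LieAlgebra.derivedSeries K B 1 ⊓ X = ⁅A, (⊤ : LieIdeal K B)⁆) :
    LieIdeal.map X.quotMk A ≤ LieAlgebra.center K (B ⧸ X) ∧
      LieIdeal.map X.quotMk A ≤ LieAlgebra.derivedSeries K (B ⧸ X) 1 := by
  constructor
  · rw [LieIdeal.map_le]
    rintro _ ⟨a, ha, rfl⟩
    rw [SetLike.mem_coe, LieModule.mem_maxTrivSubmodule]
    intro y
    obtain ⟨b, rfl⟩ := Submodule.mkQ_surjective X.toSubmodule y
    change X.toSubmodule.mkQ ⁅b, a⁆ = 0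
    rw [Submodule.mkQ_apply, Submodule.Quotient.mk_eq_zero]
    have h : ⁅a, b⁆ ∈ X := hXlow (LieSubmodule.lie_mem_lie ha (LieSubmodule.mem_top b))
    rw [← lie_skew]
    exact X.toSubmodule.neg_mem h
  · rw [LieIdeal.map_le]
    rintro _ ⟨a, ha, rfl⟩
    have ha' : a ∈ (A ⊓ LieAlgebra.derivedSeries K B 1) ⊔ X := hsum ▸ ha
    obtain ⟨y, hy, x, hx, rfl⟩ := (LieSubmodule.mem_sup _ _ _).1 ha'
    have hx0 : X.quotMk x = 0 := (Submodule.Quotient.mk_eq_zero X.toSubmodule).2 hx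
    rw [SetLike.mem_coe, map_add, hx0, add_zero]
    exact LieIdeal.derivedSeries_map_le (f := X.quotMk) 1
      (LieIdeal.mem_map ((LieSubmodule.mem_inf _ _ _).1 hy).2)
end

section
/- Every extension 0 → A → B →β L → 0 of Lie algebras over a field of characteristic different from 2 and 3 admits a stem denominator, and hence admits a stem deformation. -/
/-- **Proposition 2.3(3), purely even case.**
Every extension `0 → A → B → L → 0` of Lie algebras over a field of
characteristic different from `2` and `3` admits a stem denominator: an ideal
`X` of `B` with `[A,B] ≤ X ≤ A`, `A = (A ∩ [B,B]) + X` and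
`[B,B] ∩ X = [A,B]` (and hence it admits a stem deformation). -/
theorem stmt_6 (K : Type*) [Field K] (h2 : (2 : K) ≠ 0) (h3 : (3 : K) ≠ 0)
    (L B : Type*) [LieRing L] [LieAlgebra K L] [LieRing B] [LieAlgebra K B]
    (β : B →ₗ⁅K⁆ L) (hβ : Function.Surjective β)
    (A : LieIdeal K B) (hA : β.ker = A) :
    ∃ X : LieIdeal K B,
      ⁅A, (⊤ : LieIdeal K B)⁆ ≤ X ∧ X ≤ A ∧
      A = (A ⊓ LieAlgebra.derivedSeries K B 1) ⊔ X ∧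
      LieAlgebra.derivedSeries K B 1 ⊓ X = ⁅A, (⊤ : LieIdeal K B)⁆ := by
  have hCA : ⁅A, (⊤ : LieIdeal K B)⁆ ≤ A := LieSubmodule.lie_le_left _ _
  have hCD : ⁅A, (⊤ : LieIdeal K B)⁆ ≤ LieAlgebra.derivedSeries K B 1 := by
    have : LieAlgebra.derivedSeries K B 1 = ⁅(⊤ : LieIdeal K B), (⊤ : LieIdeal K B)⁆ := by
      simp [LieAlgebra.derivedSeries_def]
    rw [this]
    exact LieSubmodule.mono_lie_left _ le_top
  have hmem : ∀ a ∈ A, ∀ b : B, ⁅b, a⁆ ∈ ⁅A, (⊤ : LieIdeal K B)⁆ := by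
    intro a ha b
    rw [← lie_skew]
    exact neg_mem (LieSubmodule.lie_mem_lie ha (LieSubmodule.mem_top b))
  generalize ⁅A, (⊤ : LieIdeal K B)⁆ = C at *
  generalize LieAlgebra.derivedSeries K B 1 = D at *
  obtain ⟨Y, hY⟩ := exists_isCompl ((A.toSubmodule ⊓ D.toSubmodule : Submodule K B))
  have hXA : C.toSubmodule ⊔ (Y ⊓ A.toSubmodule) ≤ A.toSubmodule :=
    sup_le hCA inf_le_right
  let X : LieIdeal K B :=
    { C.toSubmodule ⊔ (Y ⊓ A.toSubmodule) with
      lie_mem := by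
        intro b m hm
        exact (le_sup_left : C.toSubmodule ≤ C.toSubmodule ⊔ (Y ⊓ A.toSubmodule))
          (hmem m (hXA hm) b) }
  have hX : X.toSubmodule = C.toSubmodule ⊔ (Y ⊓ A.toSubmodule) := rfl
  have hCX : C ≤ X := by
    rw [← LieSubmodule.toSubmodule_le_toSubmodule, hX]
    exact le_sup_left
  have hXA' : X ≤ A := by
    rw [← LieSubmodule.toSubmodule_le_toSubmodule, hX]
    exact hXA
  refine ⟨X, hCX, hXA', le_antisymm ?_ (sup_le inf_le_left hXA'),
    le_antisymm ?_ (le_inf hCD hCX)⟩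
  · intro a ha
    have : a ∈ (A.toSubmodule ⊓ D.toSubmodule) ⊔ Y := by
      rw [hY.sup_eq_top]; trivial
    obtain ⟨p, hp, y, hy, rfl⟩ := Submodule.mem_sup.1 this
    have hyA : y ∈ A := by
      have := sub_mem ha (show p ∈ A from hp.1)
      simpa using this
    rw [LieSubmodule.mem_sup]
    refine ⟨p, ⟨hp.1, hp.2⟩, y, ?_, rfl⟩
    exact (le_sup_right : Y ⊓ A.toSubmodule ≤ C.toSubmodule ⊔ (Y ⊓ A.toSubmodule)) ⟨hy, hyA⟩
  · rintro x ⟨hxD, hxX⟩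
    obtain ⟨c, hc, y, hy, rfl⟩ := Submodule.mem_sup.1
      (show x ∈ C.toSubmodule ⊔ (Y ⊓ A.toSubmodule) from hxX)
    have hyD : y ∈ D := by
      have := sub_mem (show c + y ∈ D from hxD) (hCD hc)
      simpa using this
    have h0 : y = 0 := by
      have := hY.disjoint.le_bot (show y ∈ (A.toSubmodule ⊓ D.toSubmodule) ⊓ Y from
        ⟨⟨hy.2, hyD⟩, hy.1⟩)
      simpa using this
    rw [h0, add_zero]
    exact hc
end

section
/- Let L be a finite-dimensional Lie algebra over a field of characteristic different from 2 and 3, let 0 → A → B →β L → 0 be an extension of L, let 0 → S → T →γ L → 0 be a stem extension of L, and let f : B → T be a Lie algebra homomorphism with γ ∘ f = β. Then there exists a stem denominator X of the extension 0 → A → B →β L → 0 such that f(X) = 0, and the map f̄ : B/X → T induced by f is a surjective homomorphism of extensions (in particular γ ∘ f̄ = β̄ and f̄ maps A/X onto S). -/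
/-- **Theorem 2.5, purely even case.**
Let `L` be a finite-dimensional Lie algebra over a field of characteristic
different from `2` and `3`, let `0 → A → B → L → 0` be an extension of `L`,
let `0 → S → T → L → 0` be a stem extension of `L` and let `f : B → T` be a
homomorphism of extensions (`γ ∘ f = β`).  Then there is a stem denominator
`X` of the extension `0 → A → B → L → 0` with `f(X) = 0`, such that the map
`f̄ : B/X → T` induced by `f` is a surjective homomorphism of extensions:
`f̄ ∘ mk = f`, `γ ∘ f̄ = β̄` (i.e. `γ(f̄(b + X)) = β(b)` for all `b`) and `f̄`
maps `A/X` onto `S`. -/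
theorem stmt_7 (K : Type*) [Field K] (h2 : (2 : K) ≠ 0) (h3 : (3 : K) ≠ 0)
    (L B T : Type*) [LieRing L] [LieAlgebra K L] [LieRing B] [LieAlgebra K B]
    [LieRing T] [LieAlgebra K T] [FiniteDimensional K L]
    (β : B →ₗ⁅K⁆ L) (hβ : Function.Surjective β)
    (A : LieIdeal K B) (hA : β.ker = A)
    (γ : T →ₗ⁅K⁆ L) (hγ : Function.Surjective γ)
    (S : LieIdeal K T) (hS : γ.ker = S)
    (hcentral : S ≤ LieAlgebra.center K T)
    (hstem : S ≤ LieAlgebra.derivedSeries K T 1)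
    (f : B →ₗ⁅K⁆ T) (hf : γ.comp f = β) :
    ∃ X : LieIdeal K B,
      ⁅A, (⊤ : LieIdeal K B)⁆ ≤ X ∧ X ≤ A ∧
      A = (A ⊓ LieAlgebra.derivedSeries K B 1) ⊔ X ∧
      LieAlgebra.derivedSeries K B 1 ⊓ X = ⁅A, (⊤ : LieIdeal K B)⁆ ∧
      X ≤ f.ker ∧
      ∃ fbar : B ⧸ X →ₗ⁅K⁆ T,
        fbar.comp X.quotMk = f ∧
        Function.Surjective fbar ∧
        (∀ b : B, γ (fbar (X.quotMk b)) = β b) ∧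
        LieIdeal.map fbar (LieIdeal.map X.quotMk A) = S := by
  have hBB : LieAlgebra.derivedSeries K B 1 = ⁅(⊤ : LieIdeal K B), (⊤ : LieIdeal K B)⁆ := by
    simp [LieAlgebra.derivedSeries_def]
  have hTT : LieAlgebra.derivedSeries K T 1 = ⁅(⊤ : LieIdeal K T), (⊤ : LieIdeal K T)⁆ := by
    simp [LieAlgebra.derivedSeries_def]
  have hγf : ∀ b, γ (f b) = β b := fun b => by rw [← hf]; rfl
  have memA : ∀ b, b ∈ A ↔ β b = 0 := fun b => by rw [← hA, LieHom.mem_ker]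
  have memS : ∀ t, t ∈ S ↔ γ t = 0 := fun t => by rw [← hS, LieHom.mem_ker]
  have cen : ∀ s ∈ S, ∀ t : T, ⁅t, s⁆ = 0 := fun s hs t =>
    (LieModule.mem_maxTrivSubmodule K T T s).1 (hcentral hs) t
  have cen' : ∀ s ∈ S, ∀ t : T, ⁅s, t⁆ = 0 := fun s hs t => by
    rw [← lie_skew, cen s hs t, neg_zero]
  have decomp : ∀ t : T, ∃ b : B, ∃ s ∈ S, t = f b + s := fun t => by
    obtain ⟨b, hb⟩ := hβ (γ t)
    refine ⟨b, t - f b, ?_, by abel⟩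
    rw [memS, map_sub, hγf, hb, sub_self]
  -- every element of [T,T] lifts to [B,B]
  have lift : ∀ t ∈ LieAlgebra.derivedSeries K T 1,
      ∃ b ∈ LieAlgebra.derivedSeries K B 1, f b = t := by
    intro t ht
    rw [hTT, ← LieSubmodule.mem_toSubmodule, LieSubmodule.lieIdeal_oper_eq_linear_span'] at ht
    rw [hBB]
    induction ht using Submodule.span_induction with
    | mem x hx =>
      obtain ⟨y, -, z, -, rfl⟩ := hx
      obtain ⟨b, s, hs, rfl⟩ := decomp y
      obtain ⟨c, r, hr, rfl⟩ := decomp z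
      refine ⟨⁅b, c⁆, LieSubmodule.lie_mem_lie (LieSubmodule.mem_top b)
        (LieSubmodule.mem_top c), ?_⟩
      rw [LieHom.map_lie, add_lie, cen' s hs, lie_add, cen r hr, add_zero, add_zero]
    | zero => exact ⟨0, zero_mem _, map_zero f⟩
    | add x y _ _ hx hy =>
      obtain ⟨b, hb, rfl⟩ := hx
      obtain ⟨c, hc, rfl⟩ := hy
      exact ⟨b + c, add_mem hb hc, map_add f b c⟩
    | smul k x _ hx =>
      obtain ⟨b, hb, rfl⟩ := hx
      exact ⟨k • b, Submodule.smul_mem (LieSubmodule.toSubmodule _) k hb, f.map_smul k b⟩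
  have fsurj : Function.Surjective f := fun t => by
    obtain ⟨b, s, hs, rfl⟩ := decomp t
    obtain ⟨c, -, rfl⟩ := lift s (hstem hs)
    exact ⟨b + c, map_add f b c⟩
  have hDker : ⁅A, (⊤ : LieIdeal K B)⁆ ≤ f.ker := by
    rw [LieSubmodule.lie_le_iff]
    intro a ha b _
    rw [LieHom.mem_ker, LieHom.map_lie]
    exact cen' _ ((memS _).2 (by rw [hγf]; exact (memA a).1 ha)) _
  have hDBB : ⁅A, (⊤ : LieIdeal K B)⁆ ≤ LieAlgebra.derivedSeries K B 1 := by
    rw [hBB]; exact LieSubmodule.mono_lie le_top le_rfl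
  have hkerA : f.ker ≤ A := fun b hb => by
    rw [memA, ← hγf, (LieHom.mem_ker).1 hb, map_zero]
  obtain ⟨C, hC⟩ := exists_isCompl
    (f.ker.toSubmodule ⊓ (LieAlgebra.derivedSeries K B 1).toSubmodule)
  set D := ⁅A, (⊤ : LieIdeal K B)⁆ with hD
  set BB := LieAlgebra.derivedSeries K B 1
  have hlie : ∀ x : B, ∀ a ∈ A, ⁅x, a⁆ ∈ D := fun x a ha => by
    rw [← lie_skew]
    exact neg_mem (LieSubmodule.lie_mem_lie ha (LieSubmodule.mem_top x))
  have hXker : (C ⊓ f.ker.toSubmodule) ⊔ D.toSubmodule ≤ f.ker.toSubmodule :=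
    sup_le inf_le_right hDker
  let X : LieIdeal K B :=
    { toSubmodule := (C ⊓ f.ker.toSubmodule) ⊔ D.toSubmodule
      lie_mem := fun {x m} hm =>
        (le_sup_right : D.toSubmodule ≤ (C ⊓ f.ker.toSubmodule) ⊔ D.toSubmodule)
          (hlie x m (hkerA (hXker hm))) }
  have hXX : X.toSubmodule = (C ⊓ f.ker.toSubmodule) ⊔ D.toSubmodule := rfl
  have hXk : X ≤ f.ker := hXker
  have hDX : D ≤ X :=
    (le_sup_right : D.toSubmodule ≤ (C ⊓ f.ker.toSubmodule) ⊔ D.toSubmodule)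
  -- X + (ker f ∩ [B,B]) = ker f
  have hsup : f.ker.toSubmodule ≤ X.toSubmodule ⊔ (f.ker.toSubmodule ⊓ BB.toSubmodule) := by
    intro n hn
    have : n ∈ (f.ker.toSubmodule ⊓ BB.toSubmodule) ⊔ C := by
      rw [hC.sup_eq_top]; trivial
    obtain ⟨p, hp, c, hc, rfl⟩ := Submodule.mem_sup.1 this
    refine add_mem (Submodule.mem_sup_right hp) (Submodule.mem_sup_left ?_)
    rw [hXX]
    refine Submodule.mem_sup_left ⟨hc, ?_⟩
    have := sub_mem hn hp.1
    rwa [add_sub_cancel_left] at this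
  refine ⟨X, hDX, hXk.trans hkerA, ?_, ?_, hXk, ?_⟩
  · apply le_antisymm
    · intro a ha
      have haS : f a ∈ S := by rw [memS, hγf]; exact (memA a).1 ha
      obtain ⟨b, hb, hba⟩ := lift _ (hstem haS)
      have hbA : b ∈ A := by rw [memA, ← hγf, hba]; exact (memS _).1 haS
      have hk : a - b ∈ f.ker := by rw [LieHom.mem_ker, map_sub, hba, sub_self]
      obtain ⟨x, hx, p, hp, hxp⟩ := Submodule.mem_sup.1 (hsup hk)
      rw [LieSubmodule.mem_sup]
      refine ⟨b + p, ⟨add_mem hbA (hkerA hp.1), add_mem hb hp.2⟩, x, hx, ?_⟩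
      rw [add_assoc, add_comm p x, hxp]; abel
    · exact sup_le inf_le_left (hXk.trans hkerA)
  · apply le_antisymm
    · rintro x ⟨hx1, hx2⟩
      have hx3 : x ∈ X.toSubmodule := hx2
      rw [hXX] at hx3
      obtain ⟨c, hc, d, hd, rfl⟩ := Submodule.mem_sup.1 hx3
      have hcB : c ∈ BB := by
        have := sub_mem hx1 (hDBB hd)
        rwa [add_sub_cancel_right] at this
      have hc0 : c = 0 := Submodule.disjoint_def.1 hC.disjoint c ⟨hc.2, hcB⟩ hc.1
      rw [hc0, zero_add]; exact hd
    · exact le_inf hDBB hDX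
  · let fbar : B ⧸ X →ₗ⁅K⁆ T :=
      { X.toSubmodule.liftQ (f : B →ₗ[K] T) (fun x hx => (LieHom.mem_ker).1 (hXk hx)) with
        map_lie' := fun {x y} => by
          obtain ⟨x, rfl⟩ := Submodule.mkQ_surjective X.toSubmodule x
          obtain ⟨y, rfl⟩ := Submodule.mkQ_surjective X.toSubmodule y
          exact f.map_lie x y }
    have hfb : ∀ b, fbar (X.quotMk b) = f b := fun b => rfl
    have hqs : Function.Surjective X.quotMk := Submodule.mkQ_surjective X.toSubmodule
    have hfs : Function.Surjective fbar := fun t => by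
      obtain ⟨b, rfl⟩ := fsurj t
      exact ⟨X.quotMk b, hfb b⟩
    refine ⟨fbar, LieHom.ext hfb, hfs, fun b => by rw [hfb, hγf], ?_⟩
    apply le_antisymm
    · rw [LieIdeal.map_le_iff_le_comap, LieIdeal.map_le_iff_le_comap]
      intro a ha
      rw [LieIdeal.mem_comap, LieIdeal.mem_comap, hfb, memS, hγf]
      exact (memA a).1 ha
    · intro s hs
      obtain ⟨b, rfl⟩ := fsurj s
      rw [← hfb]
      refine LieIdeal.mem_map (LieIdeal.mem_map ?_)
      rw [memA, ← hγf]; exact (memS _).1 hs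
end

section
/- Let L be a finite-dimensional Lie algebra over a field of characteristic different from 2 and 3, let 0 → R → F →π L → 0 be a free presentation of L and let 0 → S → T →γ L → 0 be a stem extension of L. Then there exist a Lie algebra homomorphism f : F → T and a stem denominator X of the free presentation such that f(X) = 0 and the induced map f̄ : F/X → T is a surjective homomorphism of extensions: γ ∘ f̄ = π̄ and f̄ maps R/X onto S. -/
/-- **Theorem 2.6, purely even case.**
Let `L` be a finite-dimensional Lie algebra over a field of characteristic
different from `2` and `3`, let `0 → R → F → L → 0` be a free presentation of
`L` and let `0 → S → T → L → 0` be a stem extension of `L`.  Then there exist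
a Lie algebra homomorphism `f : F → T` and a stem denominator `X` of the free
presentation such that `f(X) = 0` and the induced map `f̄ : F/X → T` is a
surjective homomorphism of extensions: `γ ∘ f̄ = π̄` and `f̄` maps `R/X`
onto `S`. -/
theorem stmt_9 (K : Type*) [Field K] (h2 : (2 : K) ≠ 0) (h3 : (3 : K) ≠ 0)
    (L T : Type*) [LieRing L] [LieAlgebra K L] [LieRing T] [LieAlgebra K T]
    [FiniteDimensional K L]
    (ι : Type*)
    (π : FreeLieAlgebra K ι →ₗ⁅K⁆ L) (hπ : Function.Surjective π)
    (R : LieIdeal K (FreeLieAlgebra K ι)) (hR : π.ker = R)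
    (γ : T →ₗ⁅K⁆ L) (hγ : Function.Surjective γ)
    (S : LieIdeal K T) (hS : γ.ker = S)
    (hcentral : S ≤ LieAlgebra.center K T)
    (hstem : S ≤ LieAlgebra.derivedSeries K T 1) :
    ∃ (f : FreeLieAlgebra K ι →ₗ⁅K⁆ T)
      (X : LieIdeal K (FreeLieAlgebra K ι)),
      γ.comp f = π ∧
      ⁅R, (⊤ : LieIdeal K (FreeLieAlgebra K ι))⁆ ≤ X ∧ X ≤ R ∧
      R = (R ⊓ LieAlgebra.derivedSeries K (FreeLieAlgebra K ι) 1) ⊔ X ∧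
      LieAlgebra.derivedSeries K (FreeLieAlgebra K ι) 1 ⊓ X =
        ⁅R, (⊤ : LieIdeal K (FreeLieAlgebra K ι))⁆ ∧
      X ≤ f.ker ∧
      ∃ fbar : FreeLieAlgebra K ι ⧸ X →ₗ⁅K⁆ T,
        fbar.comp X.quotMk = f ∧
        Function.Surjective fbar ∧
        (∀ b : FreeLieAlgebra K ι, γ (fbar (X.quotMk b)) = π b) ∧
        LieIdeal.map fbar (LieIdeal.map X.quotMk R) = S := by
  classical
  have hRm : ∀ x, x ∈ R ↔ π x = 0 := fun x => by rw [← hR, LieHom.mem_ker]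
  have hSm : ∀ x, x ∈ S ↔ γ x = 0 := fun x => by rw [← hS, LieHom.mem_ker]
  have hcen : ∀ s ∈ S, ∀ t : T, ⁅t, s⁆ = 0 := fun s hs t => by
    have := hcentral hs
    rw [LieModule.mem_maxTrivSubmodule] at this
    exact this t
  have hcen' : ∀ s ∈ S, ∀ t : T, ⁅s, t⁆ = 0 := fun s hs t => by
    rw [← lie_skew, hcen s hs t, neg_zero]
  -- the lift
  choose g hg using hγ
  let f : FreeLieAlgebra K ι →ₗ⁅K⁆ T :=
    FreeLieAlgebra.lift K (fun i => g (π (FreeLieAlgebra.of K i)))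
  have hf : γ.comp f = π := by
    apply FreeLieAlgebra.hom_ext
    intro i
    simp [f, hg]
  clear_value f
  have hfx : ∀ x, γ (f x) = π x := fun x => by rw [← hf]; rfl
  set D := LieAlgebra.derivedSeries K (FreeLieAlgebra K ι) 1 with hD
  have hDeq : D = ⁅(⊤ : LieIdeal K (FreeLieAlgebra K ι)), (⊤ : LieIdeal K (FreeLieAlgebra K ι))⁆ := rfl
  have hDT : LieAlgebra.derivedSeries K T 1 = ⁅(⊤ : LieIdeal K T), (⊤ : LieIdeal K T)⁆ := rfl
  have hdec : ∀ t : T, ∃ a, ∃ s ∈ S, t = f a + s := fun t => by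
    obtain ⟨a, ha⟩ := hπ (γ t)
    refine ⟨a, t - f a, ?_, by abel⟩
    rw [hSm, map_sub, hfx, ha, sub_self]
  have hT' : ∀ t ∈ LieAlgebra.derivedSeries K T 1, ∃ y ∈ D, f y = t := by
    intro t ht
    rw [hDT, ← LieSubmodule.mem_toSubmodule, LieSubmodule.lieIdeal_oper_eq_linear_span'] at ht
    induction ht using Submodule.span_induction with
    | mem x hx =>
      obtain ⟨a, -, b, -, rfl⟩ := hx
      obtain ⟨a, s, hs, rfl⟩ := hdec a
      obtain ⟨b, u, hu, rfl⟩ := hdec b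
      refine ⟨⁅a, b⁆, ?_, ?_⟩
      · rw [hDeq]
        exact LieSubmodule.lie_mem_lie (LieSubmodule.mem_top a) (LieSubmodule.mem_top b)
      · rw [LieHom.map_lie, lie_add, hcen u hu, add_zero, add_lie, hcen' s hs, add_zero]
    | zero => exact ⟨0, D.zero_mem, map_zero f⟩
    | add x y _ _ hx hy =>
      obtain ⟨a, ha, rfl⟩ := hx
      obtain ⟨b, hb, rfl⟩ := hy
      exact ⟨a + b, D.add_mem ha hb, map_add f a b⟩
    | smul c x _ hx =>
      obtain ⟨a, ha, rfl⟩ := hx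
      exact ⟨c • a, D.smul_mem c ha, map_smul f c a⟩
  have hSl : ∀ s ∈ S, ∃ y ∈ D, y ∈ R ∧ f y = s := fun s hs => by
    obtain ⟨y, hy, rfl⟩ := hT' s (hstem hs)
    exact ⟨y, hy, by rw [hRm, ← hfx, ← hSm]; exact hs, rfl⟩
  have hfsurj : Function.Surjective f := fun t => by
    obtain ⟨a, s, hs, rfl⟩ := hdec t
    obtain ⟨y, -, -, rfl⟩ := hSl s hs
    exact ⟨a + y, map_add f a y⟩
  set B := ⁅R, (⊤ : LieIdeal K (FreeLieAlgebra K ι))⁆ with hB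
  have hfR : ∀ r ∈ R, f r ∈ S := fun r hr => by rw [hSm, hfx, ← hRm]; exact hr
  have hBR : B ≤ R := LieSubmodule.lie_le_left _ _
  have hBD : B ≤ D := LieSubmodule.mono_lie le_top le_rfl
  have hBf : B ≤ f.ker := by
    rw [hB, LieSubmodule.lie_le_iff]
    intro x hx m _
    rw [LieHom.mem_ker, LieHom.map_lie]
    exact hcen' _ (hfR x hx) _
  let A : LieIdeal K (FreeLieAlgebra K ι) := R ⊓ f.ker
  obtain ⟨C, hC⟩ := exists_isCompl (A.toSubmodule ⊓ D.toSubmodule)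
  have hXR : C ⊓ A.toSubmodule ⊔ B.toSubmodule ≤ R.toSubmodule :=
    sup_le (fun x hx => hx.2.1) hBR
  let X : LieIdeal K (FreeLieAlgebra K ι) :=
    { C ⊓ A.toSubmodule ⊔ B.toSubmodule with
      lie_mem := by
        intro x m hm
        have hm' : m ∈ R := hXR hm
        refine Submodule.mem_sup_right (?_ : ⁅x, m⁆ ∈ B)
        rw [← lie_skew]
        exact B.neg_mem (LieSubmodule.lie_mem_lie hm' (LieSubmodule.mem_top x)) }
  have hXm : ∀ x, x ∈ X ↔ x ∈ C ⊓ A.toSubmodule ⊔ B.toSubmodule := fun x => Iff.rfl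
  have hBX : B ≤ X := fun x hx => (hXm x).2 (Submodule.mem_sup_right hx)
  have hXf : X ≤ f.ker := fun x hx => by
    have : C ⊓ A.toSubmodule ⊔ B.toSubmodule ≤ f.ker.toSubmodule :=
      sup_le (fun x hx => hx.2.2) hBf
    exact this hx
  have hXf0 : ∀ x ∈ X, f x = 0 := fun x hx => by simpa using hXf hx
  let fbar : FreeLieAlgebra K ι ⧸ X →ₗ⁅K⁆ T :=
    { X.toSubmodule.liftQ (f : FreeLieAlgebra K ι →ₗ[K] T) (fun x hx => hXf0 x hx) with
      map_lie' := by
        intro x y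
        obtain ⟨x, rfl⟩ := Submodule.mkQ_surjective _ x
        obtain ⟨y, rfl⟩ := Submodule.mkQ_surjective _ y
        exact LieHom.map_lie f x y }
  have hfb : ∀ x, fbar (X.quotMk x) = f x := fun x => rfl
  have hqs : Function.Surjective X.quotMk := Submodule.mkQ_surjective X.toSubmodule
  have hfbs : Function.Surjective fbar := fun t => by
    obtain ⟨x, rfl⟩ := hfsurj t
    exact ⟨X.quotMk x, rfl⟩
  refine ⟨f, X, hf, hBX, hXR, ?_, ?_, hXf, fbar, ?_, hfbs, ?_, ?_⟩
  · apply le_antisymm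
    · intro r hr
      obtain ⟨y, hyD, hyR, hy⟩ := hSl _ (hfR r hr)
      have hA : r - y ∈ A := ⟨R.sub_mem hr hyR, by simp [hy]⟩
      obtain ⟨p, hp, c, hc, hpc⟩ := Submodule.mem_sup.1
        (hC.sup_eq_top ▸ Submodule.mem_top : r - y ∈ (A.toSubmodule ⊓ D.toSubmodule) ⊔ C)
      have hcA : c ∈ A := by
        have : c = (r - y) - p := by rw [← hpc]; abel
        rw [this]; exact A.sub_mem hA hp.1
      rw [LieSubmodule.mem_sup]
      refine ⟨y + p, ⟨R.add_mem hyR hp.1.1, D.add_mem hyD hp.2⟩, c,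
        (hXm c).2 (Submodule.mem_sup_left ⟨hc, hcA⟩), ?_⟩
      rw [add_assoc, hpc]; abel
    · exact sup_le inf_le_left hXR
  · apply le_antisymm
    · rintro x ⟨hxD, hxX⟩
      obtain ⟨c, hc, b, hb, rfl⟩ := Submodule.mem_sup.1 ((hXm x).1 hxX)
      have hcD : c ∈ D := by
        have : c = (c + b) - b := by abel
        rw [this]; exact D.sub_mem hxD (hBD hb)
      have h0 : c = 0 := by
        have : c ∈ (A.toSubmodule ⊓ D.toSubmodule) ⊓ C := ⟨⟨hc.2, hcD⟩, hc.1⟩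
        rwa [hC.inf_eq_bot, Submodule.mem_bot] at this
      rw [h0, zero_add]; exact hb
    · exact le_inf hBD hBX
  · ext x; rfl
  · intro b; rw [hfb, hfx]
  · apply le_antisymm
    · rw [LieIdeal.map_le_iff_le_comap, LieIdeal.map_le_iff_le_comap]
      intro r hr
      rw [LieIdeal.mem_comap, LieIdeal.mem_comap, hfb]
      exact hfR r hr
    · intro s hs
      obtain ⟨y, -, hyR, rfl⟩ := hSl s hs
      exact LieIdeal.mem_map (LieIdeal.mem_map hyR)
end

section
/- Let L be a finite-dimensional Lie algebra over a field of characteristic different from 2 and 3 and let 0 → R → F →π L → 0 be a free presentation of L. Then for every stem denominator X of this presentation, the stem deformation 0 → R/X → F/X →π̄ L → 0 is a maximal stem extension of L, i.e. dim(R/X) ≥ dim S for every stem extension 0 → S → T → L → 0 of L. -/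
universe u

/-- A stem extension of the Lie algebra `L` over the field `K`:
a surjective Lie algebra homomorphism `γ : T → L` whose kernel is contained in
the center of `T` and in the derived subalgebra `[T,T]`. -/
structure StemExtension (K L : Type u) [Field K] [LieRing L] [LieAlgebra K L] where
  T : Type u
  [instLieRing : LieRing T]
  [instLieAlgebra : LieAlgebra K T]
  γ : T →ₗ⁅K⁆ L
  surj : Function.Surjective γ
  central : γ.ker ≤ LieAlgebra.center K T
  stem : γ.ker ≤ LieAlgebra.derivedSeries K T 1

attribute [instance] StemExtension.instLieRing StemExtension.instLieAlgebra

/-- **Theorem 2.8, one direction, purely even case.**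
Let `L` be a finite-dimensional Lie algebra over a field of characteristic
different from `2` and `3` and let `0 → R → F → L → 0` be a free presentation
of `L`.  Then for every stem denominator `X` of this presentation, the stem
deformation `0 → R/X → F/X → L → 0` is a maximal stem extension of `L`:
it is a stem extension, and `dim S ≤ dim (R/X)` for every stem extension
`0 → S → T → L → 0` of `L`. -/
theorem stmt_10 (K : Type u) [Field K] (h2 : (2 : K) ≠ 0) (h3 : (3 : K) ≠ 0)
    (L : Type u) [LieRing L] [LieAlgebra K L] [FiniteDimensional K L]
    (ι : Type u)
    (π : FreeLieAlgebra K ι →ₗ⁅K⁆ L) (hπ : Function.Surjective π)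
    (R : LieIdeal K (FreeLieAlgebra K ι)) (hR : π.ker = R)
    (X : LieIdeal K (FreeLieAlgebra K ι))
    (hXlow : ⁅R, (⊤ : LieIdeal K (FreeLieAlgebra K ι))⁆ ≤ X) (hXhigh : X ≤ R)
    (hsum : R = (R ⊓ LieAlgebra.derivedSeries K (FreeLieAlgebra K ι) 1) ⊔ X)
    (hint : LieAlgebra.derivedSeries K (FreeLieAlgebra K ι) 1 ⊓ X =
      ⁅R, (⊤ : LieIdeal K (FreeLieAlgebra K ι))⁆) :
    ∃ πbar : FreeLieAlgebra K ι ⧸ X →ₗ⁅K⁆ L,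
      πbar.comp X.quotMk = π ∧
      Function.Surjective πbar ∧
      πbar.ker = LieIdeal.map X.quotMk R ∧
      LieIdeal.map X.quotMk R ≤ LieAlgebra.center K (FreeLieAlgebra K ι ⧸ X) ∧
      LieIdeal.map X.quotMk R ≤
        LieAlgebra.derivedSeries K (FreeLieAlgebra K ι ⧸ X) 1 ∧
      ∀ E : StemExtension K L,
        Module.rank K E.γ.ker ≤ Module.rank K (LieIdeal.map X.quotMk R) := by
  have hker : ∀ x, x ∈ R ↔ π x = 0 := fun x => by rw [← hR, LieHom.mem_ker]
  have hqs : Function.Surjective X.quotMk := X.toSubmodule.mkQ_surjective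
  have hq0 : ∀ x, X.quotMk x = 0 ↔ x ∈ X := fun x =>
    Submodule.Quotient.mk_eq_zero X.toSubmodule
  have hmem : ∀ y, y ∈ LieIdeal.map X.quotMk R ↔ ∃ x ∈ R, X.quotMk x = y := by
    intro y
    rw [← LieSubmodule.mem_toSubmodule, LieIdeal.coe_map_of_surjective hqs]
    rfl
  let πbar : FreeLieAlgebra K ι ⧸ X →ₗ⁅K⁆ L :=
    { X.toSubmodule.liftQ (π : FreeLieAlgebra K ι →ₗ[K] L)
        (fun x hx => (hker x).1 (hXhigh hx)) with
      map_lie' := by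
        intro x y
        obtain ⟨x, rfl⟩ := hqs x
        obtain ⟨y, rfl⟩ := hqs y
        exact π.map_lie x y }
  have hbar : ∀ x, πbar (X.quotMk x) = π x := fun x => rfl
  refine ⟨πbar, LieHom.ext hbar, ?_, ?_, ?_, ?_, ?_⟩
  · intro l
    obtain ⟨x, rfl⟩ := hπ l
    exact ⟨X.quotMk x, hbar x⟩
  · ext y
    rw [LieHom.mem_ker, hmem]
    constructor
    · intro h
      obtain ⟨x, rfl⟩ := hqs y
      exact ⟨x, (hker x).2 h, rfl⟩
    · rintro ⟨x, hx, rfl⟩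
      exact (hker x).1 hx
  · intro y hy
    obtain ⟨x, hx, rfl⟩ := (hmem y).1 hy
    rw [LieModule.mem_maxTrivSubmodule]
    intro z
    obtain ⟨z, rfl⟩ := hqs z
    rw [← LieHom.map_lie, hq0]
    apply hXlow
    rw [LieSubmodule.lie_comm]
    exact LieSubmodule.lie_mem_lie (LieSubmodule.mem_top z) hx
  · intro y hy
    obtain ⟨x, hx, rfl⟩ := (hmem y).1 hy
    rw [hsum, LieSubmodule.mem_sup] at hx
    obtain ⟨a, ha, b, hb, rfl⟩ := hx
    rw [map_add, (hq0 b).2 hb, add_zero, ← LieIdeal.derivedSeries_map_eq 1 hqs]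
    exact LieIdeal.mem_map ha.2
  · intro E
    choose s hs using E.surj
    let σ : FreeLieAlgebra K ι →ₗ⁅K⁆ E.T :=
      FreeLieAlgebra.lift K (fun i => s (π (FreeLieAlgebra.of K i)))
    have hσ : ∀ x, E.γ (σ x) = π x := by
      have : E.γ.comp σ = π := by
        ext i
        simp [σ, hs]
      exact fun x => LieHom.congr_fun this x
    have hcen : ∀ z : E.T, E.γ z = 0 → ∀ t : E.T, ⁅t, z⁆ = 0 := fun z hz =>
      (LieModule.mem_maxTrivSubmodule K E.T E.T z).1 (E.central (LieHom.mem_ker.2 hz))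
    have hcen' : ∀ z : E.T, E.γ z = 0 → ∀ t : E.T, ⁅z, t⁆ = 0 := fun z hz t => by
      rw [← lie_skew, hcen z hz, neg_zero]
    have hder : ∀ t ∈ LieAlgebra.derivedSeries K E.T 1,
        ∃ x ∈ LieAlgebra.derivedSeries K (FreeLieAlgebra K ι) 1, σ x = t := by
      intro t ht
      have ht' : t ∈ (⁅(⊤ : LieIdeal K E.T), (⊤ : LieIdeal K E.T)⁆ : LieIdeal K E.T) := ht
      rw [← LieSubmodule.mem_toSubmodule, LieSubmodule.lieIdeal_oper_eq_linear_span'] at ht'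
      refine (Submodule.span_le (p := (LieAlgebra.derivedSeries K
        (FreeLieAlgebra K ι) 1).toSubmodule.map (σ : FreeLieAlgebra K ι →ₗ[K] E.T))).2 ?_ ht'
      rintro _ ⟨a, -, b, -, rfl⟩
      obtain ⟨x, hx⟩ := hπ (E.γ a)
      obtain ⟨y, hy⟩ := hπ (E.γ b)
      refine ⟨⁅x, y⁆, LieSubmodule.lie_mem_lie (LieSubmodule.mem_top x)
        (LieSubmodule.mem_top y), ?_⟩
      have h1 : ⁅a - σ x, b⁆ = 0 := hcen' _ (by rw [map_sub, hσ, hx, sub_self]) _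
      have h2 : ⁅σ x, b - σ y⁆ = 0 := hcen _ (by rw [map_sub, hσ, hy, sub_self]) _
      rw [sub_lie, sub_eq_zero] at h1
      rw [lie_sub, sub_eq_zero] at h2
      change σ ⁅x, y⁆ = ⁅a, b⁆
      rw [LieHom.map_lie, h1, h2]
    have hkill : ∀ x ∈ ⁅R, (⊤ : LieIdeal K (FreeLieAlgebra K ι))⁆, σ x = 0 := by
      intro x hx
      have h : ⁅R, (⊤ : LieIdeal K (FreeLieAlgebra K ι))⁆ ≤ σ.ker := by
        rw [LieSubmodule.lieIdeal_oper_eq_span, LieSubmodule.lieSpan_le]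
        rintro _ ⟨a, b, rfl⟩
        change _ ∈ σ.ker
        rw [LieHom.mem_ker, LieHom.map_lie]
        exact hcen' _ (by rw [hσ]; exact (hker _).1 a.2) _
      exact LieHom.mem_ker.1 (h hx)
    let N : Submodule K (FreeLieAlgebra K ι) :=
      (R ⊓ LieAlgebra.derivedSeries K (FreeLieAlgebra K ι) 1).toSubmodule
    let f : N →ₗ[K] E.γ.ker.toSubmodule :=
      ((σ : FreeLieAlgebra K ι →ₗ[K] E.T).comp N.subtype).codRestrict _ (fun x => by
        change σ x ∈ E.γ.ker
        rw [LieHom.mem_ker, hσ]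
        exact (hker _).1 x.2.1)
    let g : N →ₗ[K] (LieIdeal.map X.quotMk R).toSubmodule :=
      ((X.quotMk : FreeLieAlgebra K ι →ₗ[K] _).comp N.subtype).codRestrict _ (fun x =>
        LieIdeal.mem_map x.2.1)
    have hf : Function.Surjective f := by
      rintro ⟨t, ht⟩
      obtain ⟨x, hx, rfl⟩ := hder t (E.stem ht)
      refine ⟨⟨x, (hker x).2 ?_, hx⟩, rfl⟩
      rw [← hσ]
      exact LieHom.mem_ker.1 ht
    have hfg : LinearMap.ker g ≤ LinearMap.ker f := by
      intro x hx
      have hx' : X.quotMk (x : FreeLieAlgebra K ι) = 0 := congrArg Subtype.val hx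
      rw [LinearMap.mem_ker]
      apply Subtype.ext
      refine hkill x ?_
      rw [← hint]
      exact ⟨x.2.2, (hq0 _).1 hx'⟩
    have h1 : Function.Surjective ((LinearMap.ker g).liftQ f hfg) := by
      intro t
      obtain ⟨x, rfl⟩ := hf t
      exact ⟨Submodule.Quotient.mk x, rfl⟩
    calc Module.rank K E.γ.ker.toSubmodule
        ≤ Module.rank K (N ⧸ LinearMap.ker g) := LinearMap.rank_le_of_surjective _ h1
      _ = Module.rank K (LinearMap.range g) := g.quotKerEquivRange.rank_eq
      _ ≤ Module.rank K (LieIdeal.map X.quotMk R).toSubmodule := Submodule.rank_le _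
end

section
/- Let L be a finite-dimensional Lie algebra over a field of characteristic different from 2 and 3 and let 0 → R → F →π L → 0 be a free presentation of L. Then every maximal stem extension 0 → M → C →γ L → 0 of L is isomorphic as an extension to a stem deformation of this free presentation: there exist a stem denominator X of the presentation and a Lie algebra isomorphism f : F/X → C with γ ∘ f = π̄. -/
universe u

section
open scoped TensorProduct

theorem aux_lie_mem_D {K T : Type*} [Field K] [LieRing T] [LieAlgebra K T] (a b : T) :
    ⁅a, b⁆ ∈ LieAlgebra.derivedSeries K T 1 := by
  have : LieAlgebra.derivedSeries K T 1 = ⁅(⊤ : LieIdeal K T), (⊤ : LieIdeal K T)⁆ := by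
    rw [LieAlgebra.derivedSeries_def, LieAlgebra.derivedSeriesOfIdeal_succ,
      LieAlgebra.derivedSeriesOfIdeal_zero]
  rw [this]
  exact LieSubmodule.lie_mem_lie (LieSubmodule.mem_top _) (LieSubmodule.mem_top _)

theorem aux_D_le {K T : Type*} [Field K] [LieRing T] [LieAlgebra K T] (p : Submodule K T)
    (h : ∀ a b : T, ⁅a, b⁆ ∈ p) : ∀ x ∈ LieAlgebra.derivedSeries K T 1, x ∈ p := by
  intro x hx
  have h1 : LieAlgebra.derivedSeries K T 1 = ⁅(⊤ : LieIdeal K T), (⊤ : LieIdeal K T)⁆ := by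
    rw [LieAlgebra.derivedSeries_def, LieAlgebra.derivedSeriesOfIdeal_succ,
      LieAlgebra.derivedSeriesOfIdeal_zero]
  rw [h1, ← LieSubmodule.mem_toSubmodule, LieSubmodule.lieIdeal_oper_eq_linear_span'] at hx
  refine (Submodule.span_le.2 ?_) hx
  rintro _ ⟨a, -, b, -, rfl⟩
  exact h a b

theorem aux_D_lift {K F T L : Type*} [Field K] [LieRing T] [LieAlgebra K T]
    [LieRing F] [LieAlgebra K F] [LieRing L] [LieAlgebra K L]
    (γ : T →ₗ⁅K⁆ L) (hc : γ.ker ≤ LieAlgebra.center K T) (σ : F →ₗ⁅K⁆ T)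
    (hs : ∀ t, ∃ a, γ (σ a) = γ t) (t : T) (ht : t ∈ LieAlgebra.derivedSeries K T 1) :
    ∃ a ∈ LieAlgebra.derivedSeries K F 1, σ a = t := by
  refine aux_D_le (((LieAlgebra.derivedSeries K F 1).toSubmodule).map (σ : F →ₗ[K] T)) ?_ t ht
  intro x y
  obtain ⟨a, ha⟩ := hs x
  obtain ⟨b, hb⟩ := hs y
  refine ⟨⁅a, b⁆, aux_lie_mem_D a b, ?_⟩
  have hx : x - σ a ∈ LieAlgebra.center K T := hc (by simp [LieHom.mem_ker, ha])
  have hy : y - σ b ∈ LieAlgebra.center K T := hc (by simp [LieHom.mem_ker, hb])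
  rw [LieModule.mem_maxTrivSubmodule] at hx hy
  have h1 : ⁅σ a, y⁆ = ⁅σ a, σ b⁆ := by
    have := hy (σ a)
    rwa [lie_sub, sub_eq_zero] at this
  have h2 : ⁅x, y⁆ = ⁅σ a, y⁆ := by
    have := hx y
    rw [lie_sub, sub_eq_zero] at this
    rw [← lie_skew, this, lie_skew]
  change σ ⁅a, b⁆ = _
  rw [LieHom.map_lie, h2, h1]

theorem aux_fin {K F L : Type*} [Field K] [LieRing F] [LieAlgebra K F]
    [LieRing L] [LieAlgebra K L] [FiniteDimensional K L]
    (π : F →ₗ⁅K⁆ L) (hπ : Function.Surjective π) (R : LieIdeal K F) (hR : π.ker = R) :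
    FiniteDimensional K (((LieAlgebra.derivedSeries K F 1).toSubmodule).map
      (⁅R, (⊤ : LieIdeal K F)⁆).toSubmodule.mkQ) := by
  obtain ⟨s, hs⟩ := (π : F →ₗ[K] L).exists_rightInverse_of_surjective
    (LinearMap.range_eq_top.2 hπ)
  have hs' : ∀ l, π (s l) = l := fun l => LinearMap.congr_fun hs l
  let q := (⁅R, (⊤ : LieIdeal K F)⁆).toSubmodule.mkQ
  let B : L →ₗ[K] L →ₗ[K] (F ⧸ (⁅R, (⊤ : LieIdeal K F)⁆).toSubmodule) :=
    LinearMap.mk₂ K (fun x y => q ⁅s x, s y⁆) (by intros; simp) (by intros; simp)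
      (by intros; simp) (by intros; simp)
  have key : ((LieAlgebra.derivedSeries K F 1).toSubmodule).map q ≤
      LinearMap.range (TensorProduct.lift B) := by
    rw [Submodule.map_le_iff_le_comap]
    refine aux_D_le _ ?_
    intro a b
    refine ⟨π a ⊗ₜ[K] π b, ?_⟩
    rw [TensorProduct.lift.tmul]
    change q ⁅s (π a), s (π b)⁆ = q ⁅a, b⁆
    rw [← sub_eq_zero, ← map_sub]
    refine (Submodule.Quotient.mk_eq_zero _).2 ?_
    have h1 : ∀ a, s (π a) - a ∈ R := by
      intro a
      rw [← hR, LieHom.mem_ker, map_sub, hs', sub_self]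
    have e : ⁅s (π a), s (π b)⁆ - ⁅a, b⁆ =
        ⁅s (π a) - a, s (π b)⁆ - ⁅s (π b) - b, a⁆ := by
      rw [← lie_skew (s (π b) - b) a]
      simp only [sub_lie, lie_sub]; abel
    rw [e]
    exact sub_mem (LieSubmodule.lie_mem_lie (h1 a) (LieSubmodule.mem_top _))
      (LieSubmodule.lie_mem_lie (h1 b) (LieSubmodule.mem_top _))
  exact Submodule.finiteDimensional_of_le key

theorem aux_ext {K F L : Type u} [Field K] [LieRing F] [LieAlgebra K F]
    [LieRing L] [LieAlgebra K L]
    (π : F →ₗ⁅K⁆ L) (hπ : Function.Surjective π) (R : LieIdeal K F) (hR : π.ker = R)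
    (X : LieIdeal K F) (hX : ⁅R, (⊤ : LieIdeal K F)⁆ ≤ X) (hXR : X ≤ R)
    (hd : ∀ r ∈ R, ∃ a ∈ LieAlgebra.derivedSeries K F 1, r - a ∈ X) :
    ∃ E : StemExtension K L, ∃ p : F →ₗ⁅K⁆ E.T, (∀ a, E.γ (p a) = π a) ∧ p.ker = X := by
  have hk : X.toSubmodule ≤ LinearMap.ker (π : F →ₗ[K] L) := by
    intro x hx
    have := hXR hx
    rw [← hR] at this
    exact this
  let γ : F ⧸ X →ₗ⁅K⁆ L :=
    { X.toSubmodule.liftQ (π : F →ₗ[K] L) hk with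
      map_lie' := by
        intro x y
        obtain ⟨a, rfl⟩ := Submodule.mkQ_surjective _ x
        obtain ⟨b, rfl⟩ := Submodule.mkQ_surjective _ y
        exact π.map_lie a b }
  have hγ : ∀ a, γ (X.quotMk a) = π a := fun a => rfl
  have hsurj : ∀ x : F ⧸ X, ∃ a, X.quotMk a = x := fun x => Submodule.mkQ_surjective _ x
  have hz : ∀ a, X.quotMk a = 0 ↔ a ∈ X := fun a => Submodule.Quotient.mk_eq_zero _
  refine ⟨⟨F ⧸ X, γ, ?_, ?_, ?_⟩, X.quotMk, hγ, ?_⟩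
  · intro l
    obtain ⟨a, rfl⟩ := hπ l
    exact ⟨X.quotMk a, hγ a⟩
  · intro x hx
    obtain ⟨a, rfl⟩ := hsurj x
    rw [LieHom.mem_ker, hγ, ← LieHom.mem_ker, hR] at hx
    rw [LieModule.mem_maxTrivSubmodule]
    intro y
    obtain ⟨b, rfl⟩ := hsurj y
    rw [← LieHom.map_lie, hz, ← lie_skew]
    exact neg_mem (hX (LieSubmodule.lie_mem_lie hx (LieSubmodule.mem_top _)))
  · intro x hx
    obtain ⟨r, rfl⟩ := hsurj x
    rw [LieHom.mem_ker, hγ, ← LieHom.mem_ker, hR] at hx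
    obtain ⟨a, ha, hra⟩ := hd r hx
    have : X.quotMk r = X.quotMk a := by
      rw [← sub_eq_zero, ← map_sub, hz]; exact hra
    rw [this]
    refine aux_D_le (((LieAlgebra.derivedSeries K (F ⧸ X) 1).toSubmodule).comap
      (X.quotMk : F →ₗ[K] F ⧸ X)) ?_ a ha
    intro a b
    change X.quotMk ⁅a, b⁆ ∈ LieAlgebra.derivedSeries K (F ⧸ X) 1
    rw [LieHom.map_lie]
    exact aux_lie_mem_D _ _
  · ext a
    rw [LieHom.mem_ker]; exact hz a

/-- The linear algebra comparison: a surjective map `W → M` with `rank W ≤ rank M`,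
`W` finite-dimensional, is injective. -/
theorem aux_inj {K W M : Type u} [Field K] [AddCommGroup W] [Module K W] [AddCommGroup M]
    [Module K M] [FiniteDimensional K W] (f : W →ₗ[K] M) (hf : Function.Surjective f)
    (h : Module.rank K W ≤ Module.rank K M) : Function.Injective f := by
  have : FiniteDimensional K M := Module.Finite.of_surjective f hf
  have h1 := Module.finrank_le_finrank_of_rank_le_rank (R := K) 
    (Cardinal.lift_le.2 h) (Module.rank_lt_aleph0 K M)
  have h2 := LinearMap.finrank_le_finrank_of_surjective (f := f) hf
  exact (LinearMap.injective_iff_surjective_of_finrank_eq_finrank (le_antisymm h1 h2)).2 hf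

theorem aux_compl {K F : Type u} [Field K] [LieRing F] [LieAlgebra K F]
    (R D : LieIdeal K F) (hD : ⁅R, (⊤ : LieIdeal K F)⁆ ≤ D) :
    ∃ X : LieIdeal K F, ⁅R, (⊤ : LieIdeal K F)⁆ ≤ X ∧ X ≤ R ∧
      (∀ r ∈ R, ∃ a ∈ D, r - a ∈ X) ∧ ∀ x ∈ X, x ∈ D → x ∈ ⁅R, (⊤ : LieIdeal K F)⁆ := by
  set I := ⁅R, (⊤ : LieIdeal K F)⁆ with hI
  have hIR : I ≤ R := LieSubmodule.lie_le_left _ _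
  have : Fact (I.toSubmodule ≤ R.toSubmodule) := ⟨hIR⟩
  obtain ⟨⟨Y, hY1, hY2⟩, hc⟩ := exists_isCompl
    (⟨(R ⊓ D).toSubmodule, le_inf hIR hD, inf_le_left⟩ :
      Set.Icc I.toSubmodule R.toSubmodule)
  have hinf : (R ⊓ D).toSubmodule ⊓ Y = I.toSubmodule := congrArg Subtype.val hc.inf_eq_bot
  have hsup : (R ⊓ D).toSubmodule ⊔ Y = R.toSubmodule := congrArg Subtype.val hc.sup_eq_top
  refine ⟨{ Y with lie_mem := ?_ }, hY1, hY2, ?_, ?_⟩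
  · intro x m hm
    refine hY1 ?_
    rw [← lie_skew]
    exact neg_mem (LieSubmodule.lie_mem_lie (hY2 hm) (LieSubmodule.mem_top _))
  · intro r hr
    have hr' : r ∈ (R ⊓ D).toSubmodule ⊔ Y := by rw [hsup]; exact hr
    obtain ⟨a, ha, y, hy, rfl⟩ := Submodule.mem_sup.1 hr'
    refine ⟨a, ha.2, ?_⟩
    rw [add_sub_cancel_left]; exact hy
  · intro x hx hxD
    change x ∈ I.toSubmodule
    rw [← hinf]
    exact ⟨⟨hY2 hx, hxD⟩, hx⟩

end

/-- **Theorem 2.8, purely even case.**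
Let `L` be a finite-dimensional Lie algebra over a field of characteristic
different from `2` and `3` and let `0 → R → F → L → 0` be a free presentation
of `L`.  Then every maximal stem extension `0 → M → C → L → 0` of `L` is
isomorphic, as an extension, to a stem deformation of this presentation: there
exist a stem denominator `X` of the presentation and a Lie algebra isomorphism
`f : F/X ≃ C` with `γ ∘ f = π̄`. -/
theorem stmt_11 (K : Type u) [Field K] (h2 : (2 : K) ≠ 0) (h3 : (3 : K) ≠ 0)
    (L : Type u) [LieRing L] [LieAlgebra K L] [FiniteDimensional K L]
    (ι : Type u)
    (π : FreeLieAlgebra K ι →ₗ⁅K⁆ L) (hπ : Function.Surjective π)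
    (R : LieIdeal K (FreeLieAlgebra K ι)) (hR : π.ker = R)
    (E : StemExtension K L)
    (hmax : ∀ E' : StemExtension K L, Module.rank K E'.γ.ker ≤ Module.rank K E.γ.ker) :
    ∃ X : LieIdeal K (FreeLieAlgebra K ι),
      ⁅R, (⊤ : LieIdeal K (FreeLieAlgebra K ι))⁆ ≤ X ∧ X ≤ R ∧
      R = (R ⊓ LieAlgebra.derivedSeries K (FreeLieAlgebra K ι) 1) ⊔ X ∧
      LieAlgebra.derivedSeries K (FreeLieAlgebra K ι) 1 ⊓ X =
        ⁅R, (⊤ : LieIdeal K (FreeLieAlgebra K ι))⁆ ∧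
      ∃ f : (FreeLieAlgebra K ι ⧸ X) ≃ₗ⁅K⁆ E.T,
        ∀ b : FreeLieAlgebra K ι, E.γ (f (X.quotMk b)) = π b := by
  classical
  -- lift of the projection
  obtain ⟨g, hg⟩ := E.surj.hasRightInverse
  let σ : FreeLieAlgebra K ι →ₗ⁅K⁆ E.T :=
    FreeLieAlgebra.lift K (fun i => g (π (FreeLieAlgebra.of K i)))
  have hσ : ∀ a, E.γ (σ a) = π a := by
    have : E.γ.comp σ = π := by
      apply FreeLieAlgebra.hom_ext
      intro i
      rw [LieHom.comp_apply, FreeLieAlgebra.lift_of_apply, hg]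
    intro a
    rw [← this, LieHom.comp_apply]
  have hs : ∀ t, ∃ a, E.γ (σ a) = E.γ t := by
    intro t
    obtain ⟨a, ha⟩ := hπ (E.γ t)
    exact ⟨a, by rw [hσ, ha]⟩
  have hlift := aux_D_lift E.γ E.central σ hs
  have hσs : Function.Surjective σ := by
    intro t
    obtain ⟨a, ha⟩ := hs t
    obtain ⟨b, -, hb⟩ := hlift (t - σ a) (E.stem (by rw [LieHom.mem_ker, map_sub, ha, sub_self]))
    exact ⟨b + a, by rw [map_add, hb, sub_add_cancel]⟩
  have hmemR : ∀ a, a ∈ R ↔ E.γ (σ a) = 0 := by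
    intro a
    rw [hσ, ← hR, LieHom.mem_ker]
  have hIX : ⁅R, (⊤ : LieIdeal K (FreeLieAlgebra K ι))⁆ ≤ σ.ker := by
    rw [LieSubmodule.lieIdeal_oper_eq_span, LieSubmodule.lieSpan_le]
    rintro _ ⟨x, y, rfl⟩
    have hx : σ x ∈ LieAlgebra.center K E.T := E.central ((hmemR _).1 x.2)
    rw [LieModule.mem_maxTrivSubmodule] at hx
    change _ ∈ σ.ker
    rw [LieHom.mem_ker, LieHom.map_lie, ← lie_skew, hx, neg_zero]
  have hID : ⁅R, (⊤ : LieIdeal K (FreeLieAlgebra K ι))⁆ ≤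
      LieAlgebra.derivedSeries K (FreeLieAlgebra K ι) 1 := by
    rw [LieSubmodule.lieIdeal_oper_eq_span, LieSubmodule.lieSpan_le]
    rintro _ ⟨x, y, rfl⟩
    exact aux_lie_mem_D _ _
  have hXR : σ.ker ≤ R := by
    intro x hx
    rw [LieHom.mem_ker] at hx
    rw [hmemR, hx, map_zero]
  refine ⟨σ.ker, hIX, hXR, ?_, ?_, ?_⟩
  · refine le_antisymm ?_ (sup_le inf_le_left hXR)
    intro r hr
    obtain ⟨a, ha, hσa⟩ := hlift (σ r) (E.stem ((hmemR r).1 hr))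
    have haR : a ∈ R := by rw [hmemR, hσa]; exact (hmemR r).1 hr
    rw [LieSubmodule.mem_sup]
    refine ⟨a, ⟨haR, ha⟩, r - a, ?_, by abel⟩
    rw [LieHom.mem_ker, map_sub, hσa, sub_self]
  · refine le_antisymm ?_ (le_inf hID hIX)
    obtain ⟨X₀, h1, h2', h3', h4⟩ := aux_compl R _ hID
    obtain ⟨E', p, hp, hpk⟩ := aux_ext π hπ R hR X₀ h1 h2' h3'
    have hfin := aux_fin π hπ R hR
    set I := ⁅R, (⊤ : LieIdeal K (FreeLieAlgebra K ι))⁆ with hI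
    let q := I.toSubmodule.mkQ
    let W := ((R ⊓ LieAlgebra.derivedSeries K (FreeLieAlgebra K ι) 1).toSubmodule).map q
    have hW : FiniteDimensional K W :=
      Submodule.finiteDimensional_of_le (Submodule.map_mono (f := q)
        (show _ ≤ (LieAlgebra.derivedSeries K (FreeLieAlgebra K ι) 1).toSubmodule from inf_le_right))
    have hIp : I.toSubmodule ≤ LinearMap.ker (p : FreeLieAlgebra K ι →ₗ[K] E'.T) := by
      intro x hx
      have : x ∈ p.ker := by rw [hpk]; exact h1 hx
      exact this
    let σ' := I.toSubmodule.liftQ (σ : FreeLieAlgebra K ι →ₗ[K] E.T) hIX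
    let p' := I.toSubmodule.liftQ (p : FreeLieAlgebra K ι →ₗ[K] E'.T) hIp
    have hσ' : ∀ w ∈ W, σ' w ∈ E.γ.ker.toSubmodule := by
      rintro _ ⟨a, ha, rfl⟩
      exact (hmemR a).1 ha.1
    have hp' : ∀ w ∈ W, p' w ∈ E'.γ.ker.toSubmodule := by
      rintro _ ⟨a, ha, rfl⟩
      change E'.γ (p a) = 0
      rw [hp, ← hσ]
      exact (hmemR a).1 ha.1
    have hpinj : Function.Injective (p'.restrict hp') := by
      rw [injective_iff_map_eq_zero]
      rintro ⟨_, a, ha, rfl⟩ h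
      have h : p a = 0 := congrArg Subtype.val h
      rw [← LieHom.mem_ker, hpk] at h
      exact Subtype.ext ((Submodule.Quotient.mk_eq_zero _).2 (h4 a h ha.2))
    have hσsurj : Function.Surjective (σ'.restrict hσ') := by
      rintro ⟨t, ht⟩
      obtain ⟨a, ha, hσa⟩ := hlift t (E.stem ht)
      have haR : a ∈ R := by rw [hmemR, hσa]; exact ht
      exact ⟨⟨q a, a, ⟨haR, ha⟩, rfl⟩, Subtype.ext hσa⟩
    have hrank : Module.rank K W ≤ Module.rank K E.γ.ker.toSubmodule :=
      (LinearMap.rank_le_of_injective _ hpinj).trans (hmax E')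
    have hinj := aux_inj _ hσsurj hrank
    rintro x ⟨hxD, hxX⟩
    have hx : (⟨q x, x, ⟨hXR hxX, hxD⟩, rfl⟩ : W) = 0 := by
      apply hinj
      rw [map_zero]
      exact Subtype.ext hxX
    exact (Submodule.Quotient.mk_eq_zero _).1 (congrArg Subtype.val hx)
  · let e := LinearMap.quotKerEquivOfSurjective (σ : FreeLieAlgebra K ι →ₗ[K] E.T) hσs
    refine ⟨{ e with
      map_lie' := ?_ }, ?_⟩
    · intro x y
      obtain ⟨a, rfl⟩ := Submodule.mkQ_surjective _ x
      obtain ⟨b, rfl⟩ := Submodule.mkQ_surjective _ y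
      exact σ.map_lie a b
    · intro b
      exact hσ b
end

section
/- Every finite-dimensional Lie algebra L over a field of characteristic different from 2 and 3 admits a maximal stem extension: there exists a stem extension 0 → M → C → L → 0 such that dim M ≥ dim S for every stem extension 0 → S → T → L → 0 of L. -/
universe u

open TensorProduct in
theorem StemExtension.rank_ker_le (K L : Type u) [Field K] [LieRing L] [LieAlgebra K L]
    (E : StemExtension K L) :
    Module.rank K E.γ.ker ≤ Module.rank K (L ⊗[K] L) := by
  obtain ⟨s, hs⟩ := (E.γ : E.T →ₗ[K] L).exists_rightInverse_of_surjective
    (LinearMap.range_eq_top.2 E.surj)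
  have hs' : ∀ x, E.γ (s x) = x := fun x => LinearMap.congr_fun hs x
  let b : E.T →ₗ[K] E.T →ₗ[K] E.T := (LieModule.toEnd K E.T E.T : E.T →ₗ[K] Module.End K E.T)
  let g : L ⊗[K] L →ₗ[K] E.T := TensorProduct.lift (b.compl₁₂ s s)
  have hg : ∀ x y, g (x ⊗ₜ y) = ⁅s x, s y⁆ := fun x y => by simp [g, b]
  have hc : ∀ x y : E.T, E.γ x = 0 → ⁅y, x⁆ = 0 := fun x y hx => by
    have h := E.central (LieHom.mem_ker.2 hx)
    exact (LieModule.mem_maxTrivSubmodule K E.T E.T x).1 h y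
  have hbr : ∀ x y : E.T, ⁅x, y⁆ = ⁅s (E.γ x), s (E.γ y)⁆ := fun x y => by
    have h1 : ⁅x, y - s (E.γ y)⁆ = 0 := hc _ _ (by simp [hs'])
    have h2 : ⁅s (E.γ y), x - s (E.γ x)⁆ = 0 := hc _ _ (by simp [hs'])
    rw [lie_sub, sub_eq_zero] at h1 h2
    rw [h1, ← lie_skew, h2, lie_skew]
  have hle : (E.γ.ker : Submodule K E.T) ≤ LinearMap.range g := by
    intro x hx
    have h := E.stem hx
    rw [LieAlgebra.derivedSeries_def, LieAlgebra.derivedSeriesOfIdeal_succ,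
      LieAlgebra.derivedSeriesOfIdeal_zero, ← LieSubmodule.mem_toSubmodule,
      LieSubmodule.lieIdeal_oper_eq_linear_span'] at h
    refine Submodule.span_le.2 ?_ h
    rintro _ ⟨a, -, c, -, rfl⟩
    exact ⟨E.γ a ⊗ₜ E.γ c, by rw [hg, ← hbr]⟩
  exact (Submodule.rank_mono hle).trans (rank_range_le g)

/-- **Existence of maximal stem extensions (multipliers and covers), purely
even case.**  Every finite-dimensional Lie algebra `L` over a field of
characteristic different from `2` and `3` admits a maximal stem extension
`0 → M → C → L → 0`: a stem extension whose kernel `M` satisfies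
`dim S ≤ dim M` for every stem extension `0 → S → T → L → 0` of `L`. -/
theorem stmt_12 (K : Type u) [Field K] (h2 : (2 : K) ≠ 0) (h3 : (3 : K) ≠ 0)
    (L : Type u) [LieRing L] [LieAlgebra K L] [FiniteDimensional K L] :
    ∃ E : StemExtension K L,
      ∀ E' : StemExtension K L,
        Module.rank K E'.γ.ker ≤ Module.rank K E.γ.ker := by
  have hfin : Module.rank K (TensorProduct K L L) < Cardinal.aleph0 := Module.rank_lt_aleph0 K _
  let f : StemExtension K L → ℕ := fun E => Cardinal.toNat (Module.rank K E.γ.ker)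
  have hf : ∀ E, (f E : Cardinal) = Module.rank K E.γ.ker := fun E =>
    Cardinal.cast_toNat_of_lt_aleph0 ((E.rank_ker_le).trans_lt hfin)
  have hb : BddAbove (Set.range f) := by
    refine ⟨Cardinal.toNat (Module.rank K (TensorProduct K L L)), ?_⟩
    rintro _ ⟨E, rfl⟩
    exact Cardinal.toNat_le_toNat E.rank_ker_le hfin
  have hker : ∀ x : L, x ∈ (LieHom.id : L →ₗ⁅K⁆ L).ker → x = 0 := fun x hx => by
    simpa using hx
  let E₀ : StemExtension K L :=
    { T := L
      γ := LieHom.id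
      surj := fun x => ⟨x, rfl⟩
      central := fun x hx => by rw [hker x hx]; exact zero_mem _
      stem := fun x hx => by rw [hker x hx]; exact zero_mem _ }
  obtain ⟨E, hE⟩ := Nat.sSup_mem (s := Set.range f) ⟨f E₀, E₀, rfl⟩ hb
  refine ⟨E, fun E' => ?_⟩
  rw [← hf, ← hf, Nat.cast_le, hE]
  exact le_csSup hb ⟨E', rfl⟩
end

section
/- Let A₁, A₂, B₁, B₂ be Lie algebras over a field of characteristic different from 2 and 3 such that A₁ and A₂ are finite-dimensional, A₁ ≅ A₂ as Lie algebras, and A₁ × B₁ ≅ A₂ × B₂ as Lie algebras (product with componentwise bracket). Then B₁ ≅ B₂ as Lie algebras. -/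
/-- The direct product of two Lie rings, with componentwise bracket. -/
instance Prod.instLieRing (L M : Type*) [LieRing L] [LieRing M] : LieRing (L × M) where
  bracket x y := (⁅x.1, y.1⁆, ⁅x.2, y.2⁆)
  add_lie x y z := by
    show (⁅x.1 + y.1, z.1⁆, ⁅x.2 + y.2, z.2⁆) =
      (⁅x.1, z.1⁆, ⁅x.2, z.2⁆) + (⁅y.1, z.1⁆, ⁅y.2, z.2⁆)
    simp [add_lie]
  lie_add x y z := by
    show (⁅x.1, y.1 + z.1⁆, ⁅x.2, y.2 + z.2⁆) =
      (⁅x.1, y.1⁆, ⁅x.2, y.2⁆) + (⁅x.1, z.1⁆, ⁅x.2, z.2⁆)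
    simp [lie_add]
  lie_self x := by
    show (⁅x.1, x.1⁆, ⁅x.2, x.2⁆) = 0
    simp
  leibniz_lie x y z := by
    show (⁅x.1, ⁅y.1, z.1⁆⁆, ⁅x.2, ⁅y.2, z.2⁆⁆) =
      (⁅⁅x.1, y.1⁆, z.1⁆, ⁅⁅x.2, y.2⁆, z.2⁆) + (⁅y.1, ⁅x.1, z.1⁆⁆, ⁅y.2, ⁅x.2, z.2⁆⁆)
    simp only [Prod.mk_add_mk, Prod.mk.injEq]
    exact ⟨leibniz_lie _ _ _, leibniz_lie _ _ _⟩

/-- The direct product of two Lie algebras, with componentwise bracket. -/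
instance Prod.instLieAlgebra (K L M : Type*) [CommRing K] [LieRing L] [LieAlgebra K L]
    [LieRing M] [LieAlgebra K M] : LieAlgebra K (L × M) where
  lie_smul t x y := by
    show (⁅x.1, t • y.1⁆, ⁅x.2, t • y.2⁆) = t • (⁅x.1, y.1⁆, ⁅x.2, y.2⁆)
    simp [lie_smul]

namespace Cancel

universe u v w

theorem prod_lie {L M : Type*} [LieRing L] [LieRing M] (x y : L × M) :
    ⁅x, y⁆ = (⁅x.1, y.1⁆, ⁅x.2, y.2⁆) := rfl

theorem mkEquiv {K L M : Type*} [Field K] [LieRing L] [LieAlgebra K L] [LieRing M]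
    [LieAlgebra K M] (f : L →ₗ[K] M) (hl : ∀ x y, f ⁅x, y⁆ = ⁅f x, f y⁆)
    (hi : ∀ x, f x = 0 → x = 0) (hs : ∀ y, ∃ x, f x = y) : Nonempty (L ≃ₗ⁅K⁆ M) :=
  ⟨LieEquiv.ofBijective { f with map_lie' := fun {x y} => hl x y }
    ⟨(injective_iff_map_eq_zero f).2 hi, hs⟩⟩

/-- Product of isomorphisms. -/
theorem congr {K L L' M M' : Type*} [Field K] [LieRing L] [LieAlgebra K L] [LieRing M]
    [LieAlgebra K M] [LieRing L'] [LieAlgebra K L'] [LieRing M'] [LieAlgebra K M']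
    (e : L ≃ₗ⁅K⁆ L') (f : M ≃ₗ⁅K⁆ M') : Nonempty ((L × M) ≃ₗ⁅K⁆ (L' × M')) := by
  refine mkEquiv (LinearMap.prodMap (e : L →ₗ[K] L') (f : M →ₗ[K] M')) ?_ ?_ ?_
  · intro x y
    exact Prod.ext (e.map_lie x.1 y.1) (f.map_lie x.2 y.2)
  · rintro ⟨x, y⟩ h
    simpa using h
  · rintro ⟨x, y⟩
    exact ⟨(e.symm x, f.symm y), by simp⟩

theorem assoc (K L M N : Type*) [Field K] [LieRing L] [LieAlgebra K L] [LieRing M]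
    [LieAlgebra K M] [LieRing N] [LieAlgebra K N] :
    Nonempty (((L × M) × N) ≃ₗ⁅K⁆ (L × (M × N))) := by
  refine mkEquiv (LinearEquiv.prodAssoc K L M N).toLinearMap ?_ ?_ ?_
  · intro x y
    rfl
  · intro x h
    exact (LinearEquiv.map_eq_zero_iff _).1 h
  · intro x
    exact ⟨(LinearEquiv.prodAssoc K L M N).symm x, by simp⟩

theorem ofIsCompl {K L : Type*} [Field K] [LieRing L] [LieAlgebra K L] (I J : LieIdeal K L)
    (h : IsCompl I.toSubmodule J.toSubmodule) : Nonempty ((I × J) ≃ₗ⁅K⁆ L) := by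
  have hz : ∀ x ∈ I, ∀ y ∈ J, ⁅x, y⁆ = 0 := by
    intro x hx y hy
    have h1 : ⁅x, y⁆ ∈ I := lie_mem_left K L I x y hx
    have h2 : ⁅x, y⁆ ∈ J := lie_mem_right K L J x y hy
    exact Submodule.disjoint_def.1 h.disjoint _ h1 h2
  refine mkEquiv (Submodule.prodEquivOfIsCompl _ _ h).toLinearMap ?_ ?_ ?_
  · rintro ⟨⟨x, hx⟩, ⟨y, hy⟩⟩ ⟨⟨x', hx'⟩, ⟨y', hy'⟩⟩
    have e1 := hz x hx y' hy'
    have e2 : ⁅y, x'⁆ = 0 := by rw [← lie_skew, hz x' hx' y hy, neg_zero]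
    simp [e1, e2]
  · intro x hx
    exact (LinearEquiv.map_eq_zero_iff _).1 hx
  · intro x
    exact ⟨(Submodule.prodEquivOfIsCompl _ _ h).symm x, LinearEquiv.apply_symm_apply _ x⟩

section
variable {K A B₁ B₂ : Type*} [Field K] [LieRing A] [LieAlgebra K A] [LieRing B₁]
  [LieAlgebra K B₁] [LieRing B₂] [LieAlgebra K B₂]

theorem case1 [FiniteDimensional K A] (φ : (A × B₁) ≃ₗ⁅K⁆ (A × B₂))
    (ha : ∀ x : A, (φ (x, 0)).1 = 0 → x = 0) : Nonempty (B₂ ≃ₗ⁅K⁆ B₁) := by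
  let φl : (A × B₁) →ₗ[K] (A × B₂) := (φ : (A × B₁) →ₗ[K] (A × B₂))
  let ψl : (A × B₂) →ₗ[K] (A × B₁) := (φ.symm : (A × B₂) →ₗ[K] (A × B₁))
  let a : A →ₗ[K] A := LinearMap.fst K A B₂ ∘ₗ φl ∘ₗ LinearMap.inl K A B₁
  have hinj : Function.Injective a := (injective_iff_map_eq_zero a).2 ha
  have hsurj : Function.Surjective a := LinearMap.injective_iff_surjective.1 hinj
  refine mkEquiv (LinearMap.snd K A B₁ ∘ₗ ψl ∘ₗ LinearMap.inr K A B₂) ?_ ?_ ?_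
  · intro x y
    have := φ.symm.map_lie (0, x) (0, y)
    rw [prod_lie, prod_lie] at this
    simp only [lie_zero] at this
    exact congrArg Prod.snd this
  · intro x hx
    have hx : (φ.symm (0, x)).2 = 0 := hx
    have h1 : φ ((φ.symm (0, x)).1, 0) = (0, x) := by
      rw [← hx]; exact φ.apply_symm_apply _
    have h2 := ha _ (by rw [h1])
    rw [h2] at h1
    have h3 : φ (0, 0) = 0 := map_zero φl
    rw [h3] at h1
    exact (congrArg Prod.snd h1).symm
  · intro z
    obtain ⟨y, hy⟩ := hsurj (-(φ (0, z)).1)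
    have hy : (φ (y, 0)).1 = -(φ (0, z)).1 := hy
    have hs : φ (y, z) = φ (y, 0) + φ (0, z) := by
      have := map_add φl (y, 0) (0, z)
      rw [Prod.mk_add_mk, add_zero, zero_add] at this
      exact this
    have h1 : φ (y, z) = (0, (φ (y, z)).2) := by
      ext
      · rw [hs, Prod.fst_add, hy, neg_add_cancel]
      · rfl
    refine ⟨(φ (y, z)).2, ?_⟩
    change (φ.symm (0, (φ (y, z)).2)).2 = z
    rw [← h1, φ.symm_apply_apply]

theorem case2 [FiniteDimensional K A] (φ : (A × B₁) ≃ₗ⁅K⁆ (A × B₂))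
    (ha : ∀ x : A, (φ.symm (0, (φ (x, 0)).2)).1 = 0 → x = 0) : Nonempty (B₂ ≃ₗ⁅K⁆ B₁) := by
  let φl : (A × B₁) →ₗ[K] (A × B₂) := (φ : (A × B₁) →ₗ[K] (A × B₂))
  let ψl : (A × B₂) →ₗ[K] (A × B₁) := (φ.symm : (A × B₂) →ₗ[K] (A × B₁))
  have ψφ : ∀ x, ψl (φl x) = x := φ.symm_apply_apply
  have φψ : ∀ x, φl (ψl x) = x := φ.apply_symm_apply
  have φlie : ∀ x y, φl ⁅x, y⁆ = ⁅φl x, φl y⁆ := φ.map_lie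
  have ψlie : ∀ x y, ψl ⁅x, y⁆ = ⁅ψl x, ψl y⁆ := φ.symm.map_lie
  let c : A →ₗ[K] B₂ := LinearMap.snd K A B₂ ∘ₗ φl ∘ₗ LinearMap.inl K A B₁
  let b' : B₂ →ₗ[K] A := LinearMap.fst K A B₁ ∘ₗ ψl ∘ₗ LinearMap.inr K A B₂
  have hc : ∀ x, c x = (φl (x, 0)).2 := fun _ => rfl
  have hb' : ∀ x, b' x = (ψl (0, x)).1 := fun _ => rfl
  have hinj0 : ∀ x, b' (c x) = 0 → x = 0 := ha
  have hsurj : Function.Surjective (b' ∘ₗ c) :=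
    LinearMap.injective_iff_surjective.1 ((injective_iff_map_eq_zero (b' ∘ₗ c)).2 ha)
  have clie : ∀ x y, c ⁅x, y⁆ = ⁅c x, c y⁆ := by
    intro x y
    have := φlie (x, 0) (y, 0)
    rw [prod_lie, prod_lie] at this
    simp only [lie_zero] at this
    exact congrArg Prod.snd this
  have blie : ∀ x y, b' ⁅x, y⁆ = ⁅b' x, b' y⁆ := by
    intro x y
    have := ψlie (0, x) (0, y)
    rw [prod_lie, prod_lie] at this
    simp only [lie_zero] at this
    exact congrArg Prod.fst this
  let bh : B₂ →ₗ⁅K⁆ A := { b' with map_lie' := fun {x y} => blie x y }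
  let D : LieIdeal K B₂ := bh.ker
  have hD : ∀ x, x ∈ D ↔ b' x = 0 := fun x => LieHom.mem_ker
  let ι : D →ₗ[K] B₂ := D.toSubmodule.subtype
  have hcD : ∀ x, ∀ d ∈ D, ⁅c x, d⁆ = 0 := by
    intro x d hd
    rw [hD, hb'] at hd
    have h1 : ⁅φl (x, 0), ((0 : A), d)⁆ = 0 := by
      rw [← φψ (0, d), ← φlie, prod_lie, hd]
      simp only [zero_lie, lie_zero]
      exact map_zero φl
    rw [prod_lie] at h1
    exact congrArg Prod.snd h1
  have e2 : Nonempty ((A × D) ≃ₗ⁅K⁆ B₂) := by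
    refine mkEquiv (c.coprod ι) ?_ ?_ ?_
    · rintro ⟨x, d, hd⟩ ⟨x', d', hd'⟩
      have h1 := hcD x d' hd'
      have h2 : ⁅d, c x'⁆ = 0 := by rw [← lie_skew, hcD x' d hd, neg_zero]
      change c ⁅x, x'⁆ + ⁅d, d'⁆ = ⁅c x + d, c x' + d'⁆
      rw [add_lie, lie_add, lie_add, h1, h2, clie, add_zero, zero_add]
    · rintro ⟨x, d, hd⟩ h
      have h : c x + d = 0 := h
      have h1 : b' (c x) = 0 := by
        have := congrArg b' h
        rwa [map_add, (hD d).1 hd, add_zero, map_zero] at this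
      have h2 := hinj0 x h1
      subst h2
      rw [map_zero, zero_add] at h
      subst h
      rfl
    · intro w
      obtain ⟨x, hx⟩ := hsurj (b' w)
      have hx : b' (c x) = b' w := hx
      refine ⟨(x, ⟨w - c x, (hD _).2 (by rw [map_sub, hx, sub_self])⟩), ?_⟩
      change c x + (w - c x) = w
      abel
  have e1 : Nonempty ((A × D) ≃ₗ⁅K⁆ B₁) := by
    let F : (A × D) →ₗ[K] B₁ :=
      LinearMap.snd K A B₁ ∘ₗ ψl ∘ₗ LinearMap.prodMap LinearMap.id ι
    have hF : ∀ x d (hd : d ∈ D), F (x, ⟨d, hd⟩) = (ψl (x, d)).2 := fun _ _ _ => rfl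
    refine mkEquiv F ?_ ?_ ?_
    · rintro ⟨x, d, hd⟩ ⟨x', d', hd'⟩
      have := ψlie (x, d) (x', d')
      exact congrArg Prod.snd this
    · rintro ⟨x, d, hd⟩ h
      rw [hF] at h
      have h1 : φl ((ψl (x, d)).1, 0) = (x, d) := by
        rw [← h]; exact φψ _
      have h2 : c (ψl (x, d)).1 = d := by rw [hc, h1]
      have h3 : (ψl (x, d)).1 = 0 := hinj0 _ (by rw [h2]; exact (hD d).1 hd)
      rw [h3] at h1
      have h4 : φl (0, 0) = 0 := map_zero φl
      rw [h4] at h1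
      obtain ⟨h5, h6⟩ := Prod.ext_iff.1 h1
      have h5 : 0 = x := h5
      have h6 : 0 = d := h6
      subst h5 h6
      rfl
    · intro z
      obtain ⟨y, hy⟩ := hsurj (-(b' (φl (0, z)).2))
      have hy : b' (c y) = _ := hy
      have hs : φl (y, z) = φl (y, 0) + φl (0, z) := by
        rw [← map_add, Prod.mk_add_mk, add_zero, zero_add]
      have hq : (φl (y, z)).2 ∈ D := by
        rw [hD, hs, Prod.snd_add, map_add, ← hc, hy, neg_add_cancel]
      refine ⟨((φl (y, z)).1, ⟨(φl (y, z)).2, hq⟩), ?_⟩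
      rw [hF]
      change (ψl (φl (y, z))).2 = z
      rw [ψφ]
  exact ⟨e2.some.symm.trans e1.some⟩

end

theorem main {K : Type*} [Field K] (n : ℕ) : ∀ (A B₁ B₂ : Type u) [LieRing A] [LieAlgebra K A]
    [LieRing B₁] [LieAlgebra K B₁] [LieRing B₂] [LieAlgebra K B₂] [FiniteDimensional K A],
    Module.finrank K A = n → Nonempty ((A × B₁) ≃ₗ⁅K⁆ (A × B₂)) → Nonempty (B₁ ≃ₗ⁅K⁆ B₂) := by
  induction n using Nat.strong_induction_on with
  | _ n ih =>
  intro A B₁ B₂ _ _ _ _ _ _ _ hn ⟨φ⟩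
  let φl : (A × B₁) →ₗ[K] (A × B₂) := (φ : (A × B₁) →ₗ[K] (A × B₂))
  let ψl : (A × B₂) →ₗ[K] (A × B₁) := (φ.symm : (A × B₂) →ₗ[K] (A × B₁))
  have ψφ : ∀ x, ψl (φl x) = x := φ.symm_apply_apply
  have φlie : ∀ x y, φl ⁅x, y⁆ = ⁅φl x, φl y⁆ := φ.map_lie
  have ψlie : ∀ x y, ψl ⁅x, y⁆ = ⁅ψl x, ψl y⁆ := φ.symm.map_lie
  let a : A →ₗ[K] A := LinearMap.fst K A B₂ ∘ₗ φl ∘ₗ LinearMap.inl K A B₁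
  let a' : A →ₗ[K] A := LinearMap.fst K A B₁ ∘ₗ ψl ∘ₗ LinearMap.inl K A B₂
  let u : Module.End K A := a' ∘ₗ a
  have hu : ∀ x, u x = (ψl ((φl (x, 0)).1, 0)).1 := fun _ => rfl
  have ulie : ∀ x y : A, u ⁅x, y⁆ = ⁅x, u y⁆ := by
    intro x y
    have h0 : (((φl (⁅x, y⁆, 0)).1, 0) : A × B₂) = ⁅φl (x, 0), ((φl (y, 0)).1, (0 : B₂))⁆ := by
      have := φlie (x, 0) (y, 0)
      rw [prod_lie (x, 0) (y, 0)] at this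
      simp only [lie_zero] at this
      rw [this, prod_lie, prod_lie]
      simp
    rw [hu, h0, ψlie, ψφ, prod_lie, ← hu]
  have uplie : ∀ m : ℕ, ∀ x y : A, (u ^ m) ⁅x, y⁆ = ⁅x, (u ^ m) y⁆ := by
    intro m
    induction m with
    | zero => intro x y; simp
    | succ m ihm => intro x y; rw [pow_succ', Module.End.mul_apply, ihm, ulie]; rfl
  obtain ⟨m, hm, hm1⟩ := ((LinearMap.eventually_isCompl_ker_pow_range_pow u).and
    (Filter.eventually_ge_atTop 1)).exists
  let I : LieIdeal K A := { LinearMap.ker (u ^ m) with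
    lie_mem := by
      intro x y hy
      have hy : (u ^ m) y = 0 := hy
      change (u ^ m) ⁅x, y⁆ = 0
      rw [uplie, hy, lie_zero] }
  let J : LieIdeal K A := { LinearMap.range (u ^ m) with
    lie_mem := by
      rintro x _ ⟨y, rfl⟩
      exact ⟨⁅x, y⁆, uplie m x y⟩ }
  have hIJ : IsCompl I.toSubmodule J.toSubmodule := hm
  by_cases hI : LinearMap.ker (u ^ m) = ⊥
  · refine (case1 φ ?_).map LieEquiv.symm
    intro x hx
    have hx : (φl (x, 0)).1 = 0 := hx
    have h1 : u x = 0 := by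
      rw [hu, hx]
      have : ψl (0, 0) = 0 := map_zero ψl
      rw [this]; rfl
    have h2 : x ∈ LinearMap.ker (u ^ m) := by
      obtain ⟨k, rfl⟩ := Nat.exists_eq_add_of_le' hm1
      rw [LinearMap.mem_ker, pow_succ, Module.End.mul_apply, h1, map_zero]
    rw [hI] at h2
    simpa using h2
  by_cases hJ : LinearMap.range (u ^ m) = ⊥
  · refine (case2 φ ?_).map LieEquiv.symm
    intro x hx
    have hx : (ψl (0, (φl (x, 0)).2)).1 = 0 := hx
    have h1 : u x = x := by
      have h2 : ψl ((φl (x, 0)).1, 0) + ψl (0, (φl (x, 0)).2) = (x, 0) := by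
        rw [← map_add, Prod.mk_add_mk, add_zero, zero_add]
        exact ψφ _
      have h3 := congrArg Prod.fst h2
      rw [Prod.fst_add, hx, add_zero] at h3
      exact h3
    have h4 : ∀ k : ℕ, (u ^ k) x = x := by
      intro k
      induction k with
      | zero => simp
      | succ k ihk => rw [pow_succ, Module.End.mul_apply, h1, ihk]
    have h5 : x ∈ LinearMap.range (u ^ m) := ⟨x, h4 m⟩
    rw [hJ] at h5
    simpa using h5
  have hsum : Module.finrank K I + Module.finrank K J = n := by
    rw [← hn]; exact Submodule.finrank_add_eq_of_isCompl hIJ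
  have hIp : 0 < Module.finrank K I := by
    have := Submodule.one_le_finrank_iff.2 hI
    exact this
  have hJp : 0 < Module.finrank K J := by
    have := Submodule.one_le_finrank_iff.2 hJ
    exact this
  obtain ⟨e⟩ := ofIsCompl I J hIJ
  have key : Nonempty ((I × (J × B₁)) ≃ₗ⁅K⁆ (I × (J × B₂))) := by
    obtain ⟨f1⟩ := assoc K I J B₁
    obtain ⟨f2⟩ := assoc K I J B₂
    obtain ⟨g1⟩ := congr e (LieEquiv.refl : B₁ ≃ₗ⁅K⁆ B₁)
    obtain ⟨g2⟩ := congr e (LieEquiv.refl : B₂ ≃ₗ⁅K⁆ B₂)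
    exact ⟨f1.symm.trans (g1.trans (φ.trans (g2.symm.trans f2)))⟩
  have k2 := ih (Module.finrank K I) (by omega) I (J × B₁) (J × B₂) rfl key
  exact ih (Module.finrank K J) (by omega) J B₁ B₂ rfl k2

/-- Universe lifting of a Lie algebra. -/
theorem exists_lift (K : Type w) (L : Type v) [Field K] [LieRing L] [LieAlgebra K L] :
    ∃ (M : Type (max v u)) (_ : LieRing M) (_ : LieAlgebra K M), Nonempty (L ≃ₗ⁅K⁆ M) := by
  let _i1 : LieRing (ULift.{u} L) :=
    { (inferInstance : AddCommGroup (ULift.{u} L)) with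
      bracket := fun x y => ⟨⁅x.down, y.down⁆⟩
      add_lie := fun x y z => ULift.ext _ _ (add_lie x.down y.down z.down)
      lie_add := fun x y z => ULift.ext _ _ (lie_add x.down y.down z.down)
      lie_self := fun x => ULift.ext _ _ (lie_self x.down)
      leibniz_lie := fun x y z => ULift.ext _ _ (leibniz_lie x.down y.down z.down) }
  let _i2 : LieAlgebra K (ULift.{u} L) :=
    { (inferInstance : Module K (ULift.{u} L)) with
      lie_smul := fun t x y => ULift.ext _ _ (lie_smul t x.down y.down) }
  exact ⟨ULift.{u} L, _i1, _i2, mkEquiv (ULift.moduleEquiv.symm : L ≃ₗ[K] ULift.{u} L).toLinearMap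
    (fun _ _ => rfl) (fun x hx => congrArg ULift.down hx) (fun y => ⟨y.down, rfl⟩)⟩

theorem main' {K : Type*} [Field K] {A : Type u} {B₁ : Type v} {B₂ : Type w}
    [LieRing A] [LieAlgebra K A]
    [LieRing B₁] [LieAlgebra K B₁] [LieRing B₂] [LieAlgebra K B₂] [FiniteDimensional K A]
    (φ : (A × B₁) ≃ₗ⁅K⁆ (A × B₂)) : Nonempty (B₁ ≃ₗ⁅K⁆ B₂) := by
  obtain ⟨A', _, _, ⟨e⟩⟩ := exists_lift.{max u v w, u, _} K A
  obtain ⟨B₁', _, _, ⟨f₁⟩⟩ := exists_lift.{max u v w, v, _} K B₁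
  obtain ⟨B₂', _, _, ⟨f₂⟩⟩ := exists_lift.{max u v w, w, _} K B₂
  have : FiniteDimensional K A' := Module.Finite.equiv e.toLinearEquiv
  obtain ⟨g1⟩ := congr e f₁
  obtain ⟨g2⟩ := congr e f₂
  obtain ⟨h⟩ := main.{max u v w} (K := K) _ A' B₁' B₂' rfl ⟨g1.symm.trans (φ.trans g2)⟩
  exact ⟨f₁.trans (h.trans f₂.symm)⟩

end Cancel

/-- **Lemma 3.2, purely even case.**
Let `A₁, A₂, B₁, B₂` be Lie algebras over a field of characteristic different
from `2` and `3`, with `A₁, A₂` finite-dimensional.  If `A₁ ≅ A₂` and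
`A₁ × B₁ ≅ A₂ × B₂` as Lie algebras, then `B₁ ≅ B₂` as Lie algebras. -/
theorem stmt_13 (K : Type*) [Field K] (h2 : (2 : K) ≠ 0) (h3 : (3 : K) ≠ 0)
    (A₁ A₂ B₁ B₂ : Type*)
    [LieRing A₁] [LieAlgebra K A₁] [LieRing A₂] [LieAlgebra K A₂]
    [LieRing B₁] [LieAlgebra K B₁] [LieRing B₂] [LieAlgebra K B₂]
    [FiniteDimensional K A₁] [FiniteDimensional K A₂]
    (hA : Nonempty (A₁ ≃ₗ⁅K⁆ A₂))
    (hprod : Nonempty ((A₁ × B₁) ≃ₗ⁅K⁆ (A₂ × B₂))) :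
    Nonempty (B₁ ≃ₗ⁅K⁆ B₂) := by
  obtain ⟨e⟩ := hA
  obtain ⟨φ⟩ := hprod
  obtain ⟨g⟩ := Cancel.congr e.symm (LieEquiv.refl : B₂ ≃ₗ⁅K⁆ B₂)
  exact Cancel.main' (φ.trans g)
end

section
/- Let L be a finite-dimensional Lie algebra over a field of characteristic different from 2 and 3. Then the multiplier of L is unique up to Lie algebra isomorphism: if 0 → M₁ → C₁ → L → 0 and 0 → M₂ → C₂ → L → 0 are maximal stem extensions of L, then M₁ ≅ M₂. Moreover, for any free presentation 0 → R → F →π L → 0 of L, every multiplier of L is isomorphic to (R ∩ [F,F])/[R,F]. -/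
universe u

theorem StemAux.lieEquiv {K : Type u} [Field K] {A B : Type u} [LieRing A] [LieAlgebra K A]
    [LieRing B] [LieAlgebra K B] (hA : ∀ x y : A, ⁅x, y⁆ = 0) (hB : ∀ x y : B, ⁅x, y⁆ = 0)
    (h : Module.rank K A = Module.rank K B) : Nonempty (A ≃ₗ⁅K⁆ B) := by
  obtain ⟨e⟩ := nonempty_linearEquiv_of_rank_eq h
  exact ⟨{ e with
            map_lie' := by
              intro x y
              change e ⁅x, y⁆ = ⁅e x, e y⁆
              rw [hA, hB, map_zero] }⟩

theorem StemAux.ker_abelian {K L : Type u} [Field K] [LieRing L] [LieAlgebra K L]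
    (E : StemExtension K L) (x y : E.γ.ker) : ⁅x, y⁆ = 0 := by
  apply Subtype.ext
  have := E.central y.2
  rw [LieModule.mem_maxTrivSubmodule] at this
  exact this x

theorem StemAux.quotMk_surj {K F : Type u} [Field K] [LieRing F] [LieAlgebra K F]
    (I : LieIdeal K F) : Function.Surjective I.quotMk :=
  Submodule.mkQ_surjective I.toSubmodule

theorem StemAux.quotMk_eq_zero {K F : Type u} [Field K] [LieRing F] [LieAlgebra K F]
    (I : LieIdeal K F) (x : F) : I.quotMk x = 0 ↔ x ∈ I :=
  Submodule.Quotient.mk_eq_zero I.toSubmodule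

/-- every element of `[T,T]` lifts to `[F,F]`. -/
theorem StemAux.lift_derived {K F T L : Type u} [Field K] [LieRing F] [LieAlgebra K F]
    [LieRing T] [LieAlgebra K T] [LieRing L] [LieAlgebra K L]
    (γ : T →ₗ⁅K⁆ L) (hc : γ.ker ≤ LieAlgebra.center K T) (φ : F →ₗ⁅K⁆ T)
    (hφ : Function.Surjective (γ.comp φ)) :
    (LieAlgebra.derivedSeries K T 1).toSubmodule ≤
      (LieAlgebra.derivedSeries K F 1).toSubmodule.map (φ : F →ₗ[K] T) := by
  change (⁅(⊤ : LieIdeal K T), (⊤ : LieIdeal K T)⁆).toSubmodule ≤ _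
  rw [LieSubmodule.lieIdeal_oper_eq_linear_span', Submodule.span_le]
  rintro _ ⟨x, -, y, -, rfl⟩
  obtain ⟨a, ha⟩ := hφ (γ x)
  obtain ⟨b, hb⟩ := hφ (γ y)
  have hx : x - φ a ∈ LieAlgebra.center K T := hc (by
    rw [LieHom.mem_ker, map_sub, sub_eq_zero]; exact ha.symm)
  have hy : y - φ b ∈ LieAlgebra.center K T := hc (by
    rw [LieHom.mem_ker, map_sub, sub_eq_zero]; exact hb.symm)
  rw [LieModule.mem_maxTrivSubmodule] at hx hy
  refine ⟨⁅a, b⁆, LieSubmodule.lie_mem_lie (LieSubmodule.mem_top a) (LieSubmodule.mem_top b), ?_⟩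
  change φ ⁅a, b⁆ = ⁅x, y⁆
  have h1 := hy x
  have h2 := hx (φ b)
  rw [lie_sub, sub_eq_zero] at h1 h2
  rw [h1, ← lie_skew x, h2, lie_skew, LieHom.map_lie]

theorem StemAux.rank_ker_le {K F L : Type u} [Field K] [LieRing F] [LieAlgebra K F]
    [LieRing L] [LieAlgebra K L] (π : F →ₗ⁅K⁆ L) (hπ : Function.Surjective π)
    (E : StemExtension K L) (φ : F →ₗ⁅K⁆ E.T) (hφ : E.γ.comp φ = π) :
    Module.rank K E.γ.ker ≤ Module.rank K
      (LieIdeal.map (⁅π.ker, (⊤ : LieIdeal K F)⁆ : LieIdeal K F).quotMk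
          (π.ker ⊓ LieAlgebra.derivedSeries K F 1)) := by
  set J : LieIdeal K F := ⁅π.ker, (⊤ : LieIdeal K F)⁆ with hJ
  have hφ' : ∀ x, E.γ (φ x) = π x := fun x => by rw [← hφ]; rfl
  have hJφ : J.toSubmodule ≤ LinearMap.ker (φ : F →ₗ[K] E.T) := by
    rw [hJ, LieSubmodule.lieIdeal_oper_eq_linear_span', Submodule.span_le]
    rintro _ ⟨x, hx, y, -, rfl⟩
    have : φ x ∈ LieAlgebra.center K E.T := E.central (by
      rw [LieHom.mem_ker, hφ']; exact hx)
    rw [LieModule.mem_maxTrivSubmodule] at this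
    change φ ⁅x, y⁆ = 0
    rw [LieHom.map_lie, ← lie_skew, this, neg_zero]
  let f : (F ⧸ J) →ₗ[K] E.T := J.toSubmodule.liftQ (φ : F →ₗ[K] E.T) hJφ
  refine le_trans (Submodule.rank_mono (s := E.γ.ker.toSubmodule)
    (t := (LieIdeal.map J.quotMk (π.ker ⊓ LieAlgebra.derivedSeries K F 1)).toSubmodule.map f) ?_)
    (rank_map_le f _)
  intro s hs
  obtain ⟨x, hx, hxs⟩ := StemAux.lift_derived E.γ E.central φ (by rw [hφ]; exact hπ) (E.stem hs)
  change φ x = s at hxs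
  refine ⟨J.quotMk x, LieIdeal.mem_map ?_, hxs⟩
  refine (LieSubmodule.mem_inf _ _ x).2 ⟨?_, hx⟩
  rw [LieHom.mem_ker, ← hφ', hxs]
  exact hs

theorem StemAux.exists_ext {K F L : Type u} [Field K] [LieRing F] [LieAlgebra K F]
    [LieRing L] [LieAlgebra K L] (π : F →ₗ⁅K⁆ L) (hπ : Function.Surjective π) :
    ∃ E : StemExtension K L, Module.rank K
      (LieIdeal.map (⁅π.ker, (⊤ : LieIdeal K F)⁆ : LieIdeal K F).quotMk
          (π.ker ⊓ LieAlgebra.derivedSeries K F 1)) ≤ Module.rank K E.γ.ker := by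
  set J : LieIdeal K F := ⁅π.ker, (⊤ : LieIdeal K F)⁆ with hJ
  set N : LieIdeal K F := π.ker ⊓ LieAlgebra.derivedSeries K F 1 with hN
  have hJN : J ≤ N := le_inf (LieSubmodule.lie_le_left _ _)
    (LieSubmodule.mono_lie le_top le_rfl)
  have hNR : N ≤ π.ker := inf_le_left
  have hlie : ∀ x y : F, y ∈ π.ker → ⁅x, y⁆ ∈ J := fun x y hy => by
    rw [← lie_skew]
    exact J.neg_mem (LieSubmodule.lie_mem_lie hy (LieSubmodule.mem_top x))
  obtain ⟨C, hC⟩ := exists_isCompl N.toSubmodule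
  let S : Submodule K F := J.toSubmodule ⊔ (C ⊓ π.ker.toSubmodule)
  have hSR : S ≤ π.ker.toSubmodule := sup_le (hJN.trans hNR) inf_le_right
  let I : LieIdeal K F := { S with
    lie_mem := fun {x y} hy => (le_sup_left : J.toSubmodule ≤ S) (hlie x y (hSR hy)) }
  have hIS : I.toSubmodule = S := rfl
  have hIN : ∀ x ∈ I, x ∈ N → x ∈ J := by
    intro x hx hxN
    obtain ⟨j, hj, c, hc, rfl⟩ := Submodule.mem_sup.1 (show x ∈ S from hx)
    have hcN : c ∈ N := by
      have := N.sub_mem hxN (hJN hj)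
      simpa using this
    have : c = 0 := (Submodule.disjoint_def.1 hC.disjoint) c hcN hc.1
    rw [this, add_zero]; exact hj
  have hdec : ∀ x ∈ π.ker, ∃ n ∈ N, x - n ∈ I := by
    intro x hx
    have : x ∈ N.toSubmodule ⊔ C := by rw [hC.sup_eq_top]; trivial
    obtain ⟨n, hn, c, hc, rfl⟩ := Submodule.mem_sup.1 this
    refine ⟨n, hn, ?_⟩
    have hcR : c ∈ π.ker := by
      have := π.ker.sub_mem hx (hNR hn)
      simpa using this
    rw [add_sub_cancel_left]
    exact (le_sup_right : (C ⊓ π.ker.toSubmodule) ≤ S) ⟨hc, hcR⟩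
  let γ : (F ⧸ I) →ₗ⁅K⁆ L :=
    { I.toSubmodule.liftQ (π : F →ₗ[K] L) hSR with
      map_lie' := by
        intro x y
        obtain ⟨x, rfl⟩ := StemAux.quotMk_surj I x
        obtain ⟨y, rfl⟩ := StemAux.quotMk_surj I y
        exact π.map_lie x y }
  have hγ : ∀ x, γ (I.quotMk x) = π x := fun x => rfl
  let E : StemExtension K L :=
    { T := F ⧸ I
      γ := γ
      surj := fun l => by
        obtain ⟨x, rfl⟩ := hπ l
        exact ⟨I.quotMk x, rfl⟩
      central := by
        intro z hz
        obtain ⟨x, rfl⟩ := StemAux.quotMk_surj I z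
        rw [LieHom.mem_ker, hγ] at hz
        rw [LieModule.mem_maxTrivSubmodule]
        intro w
        obtain ⟨y, rfl⟩ := StemAux.quotMk_surj I w
        rw [← LieHom.map_lie, StemAux.quotMk_eq_zero]
        exact (le_sup_left : J.toSubmodule ≤ S) (hlie y x hz)
      stem := by
        intro z hz
        obtain ⟨x, rfl⟩ := StemAux.quotMk_surj I z
        rw [LieHom.mem_ker, hγ] at hz
        obtain ⟨n, hn, hxn⟩ := hdec x hz
        have : I.quotMk x = I.quotMk n := by
          rw [← sub_eq_zero, ← map_sub, StemAux.quotMk_eq_zero]; exact hxn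
        rw [this, ← LieIdeal.derivedSeries_map_eq 1 (StemAux.quotMk_surj I)]
        exact LieIdeal.mem_map ((LieSubmodule.mem_inf _ _ n).1 hn).2 }
  refine ⟨E, ?_⟩
  let f : (F ⧸ J) →ₗ[K] (F ⧸ I) := J.toSubmodule.liftQ (I.quotMk : F →ₗ[K] F ⧸ I) (by
    intro x hx
    exact (StemAux.quotMk_eq_zero I x).2 ((le_sup_left : J.toSubmodule ≤ S) hx))
  have hf : ∀ x, f (J.quotMk x) = I.quotMk x := fun x => rfl
  let M := LieIdeal.map J.quotMk N
  let g : M.toSubmodule →ₗ[K] γ.ker.toSubmodule := (f.domRestrict M.toSubmodule).codRestrict _ (by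
    rintro ⟨m, hm⟩
    obtain ⟨⟨x, hx⟩, rfl⟩ := LieIdeal.mem_map_of_surjective (StemAux.quotMk_surj J) hm
    change π x = 0
    exact hNR hx)
  refine LinearMap.rank_le_of_injective g ?_
  rw [injective_iff_map_eq_zero]
  rintro ⟨m, hm⟩ h0
  obtain ⟨⟨x, hx⟩, rfl⟩ := LieIdeal.mem_map_of_surjective (StemAux.quotMk_surj J) hm
  have h1 : I.quotMk x = 0 := congrArg Subtype.val h0
  rw [StemAux.quotMk_eq_zero] at h1
  apply Subtype.ext
  exact (StemAux.quotMk_eq_zero J x).2 (hIN x h1 hx)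

theorem StemAux.map_abelian {K F L : Type u} [Field K] [LieRing F] [LieAlgebra K F]
    [LieRing L] [LieAlgebra K L] (π : F →ₗ⁅K⁆ L)
    (x y : (LieIdeal.map (⁅π.ker, (⊤ : LieIdeal K F)⁆ : LieIdeal K F).quotMk
          (π.ker ⊓ LieAlgebra.derivedSeries K F 1))) : ⁅x, y⁆ = 0 := by
  obtain ⟨x, hx⟩ := x
  obtain ⟨y, hy⟩ := y
  apply Subtype.ext
  change ⁅x, y⁆ = 0
  obtain ⟨⟨a, ha⟩, rfl⟩ := LieIdeal.mem_map_of_surjective (StemAux.quotMk_surj _) hx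
  obtain ⟨b, rfl⟩ := StemAux.quotMk_surj _ y
  rw [← LieHom.map_lie, StemAux.quotMk_eq_zero]
  exact LieSubmodule.lie_mem_lie ((LieSubmodule.mem_inf _ _ a).1 ha).1 (LieSubmodule.mem_top b)

/-- **Theorem 3.3, uniqueness of the multiplier, purely even case.**
Let `L` be a finite-dimensional Lie algebra over a field of characteristic
different from `2` and `3`.  The multiplier of `L` is unique up to Lie algebra
isomorphism: the kernels of any two maximal stem extensions of `L` are
isomorphic.  Moreover, for any free presentation `0 → R → F → L → 0` of `L`,
every multiplier of `L` is isomorphic to `(R ∩ [F,F])/[R,F]`, realised as the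
image of `R ⊓ [F,F]` in `F ⧸ [R,F]`. -/
theorem stmt_14 (K : Type u) [Field K] (h2 : (2 : K) ≠ 0) (h3 : (3 : K) ≠ 0)
    (L : Type u) [LieRing L] [LieAlgebra K L] [FiniteDimensional K L]
    (E₁ E₂ : StemExtension K L)
    (hmax₁ : ∀ E' : StemExtension K L,
      Module.rank K E'.γ.ker ≤ Module.rank K E₁.γ.ker)
    (hmax₂ : ∀ E' : StemExtension K L,
      Module.rank K E'.γ.ker ≤ Module.rank K E₂.γ.ker) :
    Nonempty (E₁.γ.ker ≃ₗ⁅K⁆ E₂.γ.ker) ∧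
    ∀ (ι : Type u) (π : FreeLieAlgebra K ι →ₗ⁅K⁆ L),
      Function.Surjective π →
      Nonempty (E₁.γ.ker ≃ₗ⁅K⁆
        (LieIdeal.map (⁅π.ker, (⊤ : LieIdeal K (FreeLieAlgebra K ι))⁆ :
            LieIdeal K (FreeLieAlgebra K ι)).quotMk
          (π.ker ⊓ LieAlgebra.derivedSeries K (FreeLieAlgebra K ι) 1))) := by
  refine ⟨StemAux.lieEquiv (StemAux.ker_abelian E₁) (StemAux.ker_abelian E₂)
    (le_antisymm (hmax₂ E₁) (hmax₁ E₂)), ?_⟩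
  intro ι π hπ
  refine StemAux.lieEquiv (StemAux.ker_abelian E₁) (StemAux.map_abelian π) (le_antisymm ?_ ?_)
  · choose s hs using E₁.surj
    refine StemAux.rank_ker_le π hπ E₁
      (FreeLieAlgebra.lift K fun i => s (π (FreeLieAlgebra.of K i))) ?_
    apply FreeLieAlgebra.hom_ext
    intro i
    rw [LieHom.comp_apply, FreeLieAlgebra.lift_of_apply, hs]
  · obtain ⟨E, hE⟩ := StemAux.exists_ext π hπ
    exact hE.trans (hmax₁ E)
end

section
/- Let L be a finite-dimensional Lie algebra over a field of characteristic different from 2 and 3. Then the cover of L is unique up to Lie algebra isomorphism: if 0 → M₁ → C₁ → L → 0 and 0 → M₂ → C₂ → L → 0 are maximal stem extensions of L, then C₁ ≅ C₂ as Lie algebras. -/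
universe u

open LieAlgebra in
theorem aux_lie_mem {K T : Type*} [Field K] [LieRing T] [LieAlgebra K T] (x y : T) :
    ⁅x, y⁆ ∈ derivedSeries K T 1 :=
  LieSubmodule.lie_mem_lie (LieSubmodule.mem_top x) (LieSubmodule.mem_top y)

open LieAlgebra in
theorem aux_derived_le {K T : Type*} [Field K] [LieRing T] [LieAlgebra K T] (N : Submodule K T)
    (h : ∀ x y : T, ⁅x, y⁆ ∈ N) {z : T} (hz : z ∈ derivedSeries K T 1) : z ∈ N := by
  have h1 : (derivedSeries K T 1).toSubmodule ≤ N := by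
    have : derivedSeries K T 1 = ⁅(⊤ : LieIdeal K T), (⊤ : LieIdeal K T)⁆ := rfl
    rw [this, LieSubmodule.lieIdeal_oper_eq_linear_span', Submodule.span_le]
    rintro _ ⟨x, -, y, -, rfl⟩
    exact h x y
  exact h1 hz

open LieAlgebra in
theorem aux_lift {K T P : Type*} [Field K] [LieRing T] [LieAlgebra K T] [LieRing P]
    [LieAlgebra K P] (f : P →ₗ⁅K⁆ T) (hf : Function.Surjective f) {z : T}
    (hz : z ∈ derivedSeries K T 1) : ∃ p ∈ derivedSeries K P 1, f p = z := by
  have := aux_derived_le ((derivedSeries K P 1).toSubmodule.map (f : P →ₗ[K] T)) ?_ hz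
  · obtain ⟨p, hp, h⟩ := this
    exact ⟨p, hp, h⟩
  · intro x y
    obtain ⟨a, rfl⟩ := hf x
    obtain ⟨b, rfl⟩ := hf y
    exact ⟨⁅a, b⁆, aux_lie_mem a b, by simp⟩

open LieAlgebra in
theorem aux_push {K T P : Type*} [Field K] [LieRing T] [LieAlgebra K T] [LieRing P]
    [LieAlgebra K P] (f : P →ₗ⁅K⁆ T) {z : P}
    (hz : z ∈ derivedSeries K P 1) : f z ∈ derivedSeries K T 1 := by
  refine aux_derived_le ((derivedSeries K T 1).toSubmodule.comap (f : P →ₗ[K] T)) ?_ hz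
  intro x y
  simp only [Submodule.mem_comap, LieHom.coe_toLinearMap, LieHom.map_lie]
  exact aux_lie_mem _ _

open LieAlgebra in
theorem aux_center {K T : Type*} [Field K] [LieRing T] [LieAlgebra K T] {L : Type*} [LieRing L]
    [LieAlgebra K L] (g : T →ₗ⁅K⁆ L) (hc : g.ker ≤ center K T) {a b c d : T}
    (h1 : g a = g b) (h2 : g c = g d) : ⁅a, c⁆ = ⁅b, d⁆ := by
  have e1 : ∀ x : T, ⁅x, a - b⁆ = 0 := (LieModule.mem_maxTrivSubmodule K T T _).1
    (hc (by rw [LieHom.mem_ker, map_sub, h1, sub_self]))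
  have e2 : ∀ x : T, ⁅x, c - d⁆ = 0 := (LieModule.mem_maxTrivSubmodule K T T _).1
    (hc (by rw [LieHom.mem_ker, map_sub, h2, sub_self]))
  have e3 : ⁅a, c⁆ = ⁅a, d⁆ := by
    have := e2 a
    rwa [lie_sub, sub_eq_zero] at this
  have e4 : ⁅a, d⁆ = ⁅b, d⁆ := by
    have := e1 d
    rw [lie_sub, sub_eq_zero] at this
    rw [← lie_skew, this, lie_skew]
  rw [e3, e4]

open LieAlgebra TensorProduct in
theorem aux_finite {K L T : Type*} [Field K] [LieRing L] [LieAlgebra K L] [FiniteDimensional K L]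
    [LieRing T] [LieAlgebra K T] (g : T →ₗ⁅K⁆ L) (hs : Function.Surjective g)
    (hc : g.ker ≤ center K T) (hd : g.ker ≤ derivedSeries K T 1) :
    FiniteDimensional K g.ker := by
  obtain ⟨σ, hσ⟩ := (g : T →ₗ[K] L).exists_rightInverse_of_surjective
    (LinearMap.range_eq_top.2 hs)
  have hσ' : ∀ x, g (σ x) = x := fun x => LinearMap.congr_fun hσ x
  let φ : L ⊗[K] L →ₗ[K] T :=
    TensorProduct.lift ((LieModule.toEnd K T T : T →ₗ[K] Module.End K T).compl₁₂ σ σ)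
  have hle : g.ker.toSubmodule ≤ LinearMap.range φ := by
    intro z hz
    refine aux_derived_le _ ?_ (hd hz)
    intro x y
    refine ⟨g x ⊗ₜ g y, ?_⟩
    simp only [φ, TensorProduct.lift.tmul]
    exact aux_center g hc (hσ' _) (hσ' _)
  exact Submodule.finiteDimensional_of_le hle

open LieAlgebra in
theorem aux_stem {K L P : Type u} [Field K] [LieRing L] [LieAlgebra K L]
    [LieRing P] [LieAlgebra K P] (g : P →ₗ⁅K⁆ L) (hs : Function.Surjective g)
    (hc : g.ker ≤ center K P) :
    ∃ E : StemExtension K L, Module.rank K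
      (g.ker.toSubmodule ⊓ (derivedSeries K P 1).toSubmodule : Submodule K P) ≤
        Module.rank K E.γ.ker := by
  set B := (g.ker.toSubmodule ⊓ (derivedSeries K P 1).toSubmodule : Submodule K P) with hB
  obtain ⟨C, hC⟩ := B.exists_isCompl
  have hz : ∀ z ∈ g.ker, ∀ x : P, ⁅x, z⁆ = 0 := fun z hz =>
    (LieModule.mem_maxTrivSubmodule K P P _).1 (hc hz)
  let D : LieIdeal K P :=
    { g.ker.toSubmodule ⊓ C with
      lie_mem := by
        intro x m hm
        have : ⁅x, m⁆ = 0 := hz m hm.1 x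
        rw [this]
        exact (g.ker.toSubmodule ⊓ C).zero_mem }
  have hDmem : ∀ z, z ∈ D ↔ z ∈ g.ker ∧ z ∈ C := fun z => Iff.rfl
  have hBD : ∀ z ∈ g.ker, ∃ b ∈ B, z - b ∈ D := by
    intro z hz
    obtain ⟨b, hb, c, hc', rfl⟩ := Submodule.mem_sup.1
      (show z ∈ B ⊔ C by rw [hC.sup_eq_top]; trivial)
    refine ⟨b, hb, ?_⟩
    rw [add_sub_cancel_left, hDmem]
    refine ⟨?_, hc'⟩
    have := g.ker.sub_mem hz hb.1
    rwa [add_sub_cancel_left] at this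
  let q : P →ₗ⁅K⁆ P ⧸ D :=
    { D.toSubmodule.mkQ with map_lie' := fun {_ _} => rfl }
  have hq : Function.Surjective q := D.toSubmodule.mkQ_surjective
  have hq0 : ∀ z, q z = 0 ↔ z ∈ D := fun z => Submodule.Quotient.mk_eq_zero D.toSubmodule
  have hDk : D.toSubmodule ≤ LinearMap.ker (g : P →ₗ[K] L) := fun z hz => hz.1
  let γ : P ⧸ D →ₗ⁅K⁆ L :=
    { D.toSubmodule.liftQ (g : P →ₗ[K] L) hDk with
      map_lie' := by
        intro x y
        obtain ⟨a, rfl⟩ := hq x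
        obtain ⟨b, rfl⟩ := hq y
        exact g.map_lie a b }
  have hγ : ∀ x, γ (q x) = g x := fun x => rfl
  refine ⟨{ T := P ⧸ D, γ := γ, surj := ?_, central := ?_, stem := ?_ }, ?_⟩
  · intro y
    obtain ⟨x, rfl⟩ := hs y
    exact ⟨q x, rfl⟩
  · intro z hz'
    obtain ⟨a, rfl⟩ := hq z
    refine (LieModule.mem_maxTrivSubmodule K _ _ _).2 ?_
    intro x
    obtain ⟨b, rfl⟩ := hq x
    rw [← LieHom.map_lie, hz a hz', map_zero]
  · intro z hz'
    obtain ⟨a, rfl⟩ := hq z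
    obtain ⟨b, hb, hab⟩ := hBD a hz'
    have : q a = q b := by
      rw [← sub_eq_zero, ← map_sub, hq0]
      exact hab
    rw [this]
    exact aux_push q hb.2
  · let i : B →ₗ[K] γ.ker.toSubmodule :=
      ((q : P →ₗ[K] P ⧸ D).comp B.subtype).codRestrict _ (fun b => b.2.1)
    refine LinearMap.rank_le_of_injective i ?_
    rw [← LinearMap.ker_eq_bot, LinearMap.ker_eq_bot']
    intro b hb
    have h0 : q b = 0 := congrArg Subtype.val hb
    have hbC := ((hDmem _).1 ((hq0 _).1 h0)).2
    have : (b : P) ∈ B ⊓ C := ⟨b.2, hbC⟩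
    rw [hC.inf_eq_bot] at this
    exact Subtype.ext this

/-- **Theorem 3.3, uniqueness of the cover, purely even case.**
Let `L` be a finite-dimensional Lie algebra over a field of characteristic
different from `2` and `3`.  The cover of `L` is unique up to Lie algebra
isomorphism: the middle terms of any two maximal stem extensions of `L` are
isomorphic as Lie algebras. -/
theorem stmt_15 (K : Type u) [Field K] (h2 : (2 : K) ≠ 0) (h3 : (3 : K) ≠ 0)
    (L : Type u) [LieRing L] [LieAlgebra K L] [FiniteDimensional K L]
    (E₁ E₂ : StemExtension K L)
    (hmax₁ : ∀ E' : StemExtension K L,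
      Module.rank K E'.γ.ker ≤ Module.rank K E₁.γ.ker)
    (hmax₂ : ∀ E' : StemExtension K L,
      Module.rank K E'.γ.ker ≤ Module.rank K E₂.γ.ker) :
    Nonempty (E₁.T ≃ₗ⁅K⁆ E₂.T) := by
  classical
  have : FiniteDimensional K E₁.γ.ker := aux_finite E₁.γ E₁.surj E₁.central E₁.stem
  have : FiniteDimensional K E₂.γ.ker := aux_finite E₂.γ E₂.surj E₂.central E₂.stem
  let P : LieSubalgebra K (E₁.T × E₂.T) :=
    { LinearMap.eqLocus ((E₁.γ : E₁.T →ₗ[K] L).comp (LinearMap.fst K E₁.T E₂.T))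
        ((E₂.γ : E₂.T →ₗ[K] L).comp (LinearMap.snd K E₁.T E₂.T)) with
      lie_mem' := by
        intro x y hx hy
        have hx' : E₁.γ x.1 = E₂.γ x.2 := hx
        have hy' : E₁.γ y.1 = E₂.γ y.2 := hy
        change E₁.γ ⁅x.1, y.1⁆ = E₂.γ ⁅x.2, y.2⁆
        rw [LieHom.map_lie, LieHom.map_lie, hx', hy'] }
  have hP : ∀ x : E₁.T × E₂.T, x ∈ P ↔ E₁.γ x.1 = E₂.γ x.2 := fun x => Iff.rfl
  let p₁ : P →ₗ⁅K⁆ E₁.T := (LieHom.fst K E₁.T E₂.T).comp P.incl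
  let p₂ : P →ₗ⁅K⁆ E₂.T := (LieHom.snd K E₁.T E₂.T).comp P.incl
  have hp : ∀ x : P, E₁.γ (p₁ x) = E₂.γ (p₂ x) := fun x => x.2
  have hext : ∀ x y : P, p₁ x = p₁ y → p₂ x = p₂ y → x = y := fun x y h h' =>
    Subtype.ext (Prod.ext h h')
  have hmk : ∀ a b, E₁.γ a = E₂.γ b → ∃ x : P, p₁ x = a ∧ p₂ x = b := fun a b h =>
    ⟨⟨(a, b), h⟩, rfl, rfl⟩
  have hs₁ : Function.Surjective p₁ := by
    intro a
    obtain ⟨b, hb⟩ := E₂.surj (E₁.γ a)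
    obtain ⟨x, hx, -⟩ := hmk a b hb.symm
    exact ⟨x, hx⟩
  let π : P →ₗ⁅K⁆ L := E₁.γ.comp p₁
  have hπ : ∀ x, π x = E₁.γ (p₁ x) := fun x => rfl
  have hπs : Function.Surjective π := E₁.surj.comp hs₁
  have hπc : π.ker ≤ LieAlgebra.center K P := by
    intro z hz
    have hz1 : E₁.γ (p₁ z) = 0 := hz
    have hz2 : E₂.γ (p₂ z) = 0 := by rw [← hp, hz1]
    refine (LieModule.mem_maxTrivSubmodule K _ _ _).2 ?_
    intro x
    refine hext _ _ ?_ ?_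
    · rw [LieHom.map_lie, map_zero]
      exact (LieModule.mem_maxTrivSubmodule K _ _ _).1 (E₁.central hz1) _
    · rw [LieHom.map_lie, map_zero]
      exact (LieModule.mem_maxTrivSubmodule K _ _ _).1 (E₂.central hz2) _
  obtain ⟨E, hE⟩ := aux_stem π hπs hπc
  set B := (π.ker.toSubmodule ⊓ (LieAlgebra.derivedSeries K P 1).toSubmodule : Submodule K P)
    with hB
  have hBr : Module.rank K B ≤ Module.rank K E₁.γ.ker := hE.trans (hmax₁ E)
  have hBfin : FiniteDimensional K B := by
    rw [FiniteDimensional, ← Module.rank_lt_aleph0_iff]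
    exact hBr.trans_lt (Module.rank_lt_aleph0 K E₁.γ.ker)
  have hBf : Module.finrank K B ≤ Module.finrank K E₁.γ.ker.toSubmodule :=
    Module.finrank_le_finrank_of_rank_le_rank (Cardinal.lift_le.2 hBr)
      (Module.rank_lt_aleph0 K E₁.γ.ker)
  let r : B →ₗ[K] E₁.γ.ker.toSubmodule :=
    ((p₁ : P →ₗ[K] E₁.T).comp B.subtype).codRestrict _ (fun b => b.2.1)
  have hr : Function.Surjective r := by
    rintro ⟨s, hs⟩
    obtain ⟨x, hx, hxs⟩ := aux_lift p₁ hs₁ (E₁.stem hs)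
    have hs0 : E₁.γ s = 0 := hs
    refine ⟨⟨x, ⟨?_, hx⟩⟩, Subtype.ext hxs⟩
    change E₁.γ (p₁ x) = 0
    rw [hxs, hs0]
  have hrf : Module.finrank K B = Module.finrank K E₁.γ.ker.toSubmodule :=
    le_antisymm hBf (LinearMap.finrank_le_finrank_of_surjective hr)
  have hri : Function.Injective r :=
    (LinearMap.injective_iff_surjective_of_finrank_eq_finrank hrf).2 hr
  have hinj : ∀ x ∈ LieAlgebra.derivedSeries K P 1, p₁ x = 0 → x = 0 := by
    intro x hx h
    have hxB : x ∈ B := ⟨by change E₁.γ (p₁ x) = 0; rw [h, map_zero], hx⟩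
    have : (⟨x, hxB⟩ : B) = 0 := hri (by rw [map_zero]; exact Subtype.ext h)
    exact congrArg Subtype.val this
  -- a linear map `f : P → S₂` killing `[P,P]` and restricting to `-id` on `0 × S₂`
  let N : Submodule K P := LinearMap.ker (p₁ : P →ₗ[K] E₁.T)
  have hN : ∀ x, x ∈ N ↔ p₁ x = 0 := fun x => Iff.rfl
  let DP := (LieAlgebra.derivedSeries K P 1).toSubmodule
  obtain ⟨ρ, hρ⟩ := (DP.mkQ.comp N.subtype).exists_leftInverse_of_injective (by
    rw [LinearMap.ker_eq_bot']
    intro x hx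
    have hx' : (x : P) ∈ LieAlgebra.derivedSeries K P 1 :=
      (Submodule.Quotient.mk_eq_zero DP).1 hx
    exact Subtype.ext (hinj _ hx' x.2))
  let f : P →ₗ[K] P := N.subtype.comp (ρ.comp DP.mkQ)
  have hfN : ∀ x, p₁ (f x) = 0 := fun x => (ρ (DP.mkQ x)).2
  have hfN2 : ∀ x, E₂.γ (p₂ (f x)) = 0 := fun x => by rw [← hp, hfN, map_zero]
  have hfD : ∀ x y : P, f ⁅x, y⁆ = 0 := by
    intro x y
    have : DP.mkQ ⁅x, y⁆ = 0 := (Submodule.Quotient.mk_eq_zero DP).2 (aux_lie_mem x y)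
    simp only [f, LinearMap.comp_apply, this, map_zero]
  have hfid : ∀ x, p₁ x = 0 → f x = x := by
    intro x hx
    have := LinearMap.congr_fun hρ ⟨x, hx⟩
    exact congrArg Subtype.val this
  -- `ψ x = p₂ (x - f x)`
  let ψ : P →ₗ⁅K⁆ E₂.T :=
    { (p₂ : P →ₗ[K] E₂.T).comp (LinearMap.id - f) with
      map_lie' := by
        intro x y
        change p₂ (⁅x, y⁆ - f ⁅x, y⁆) = ⁅p₂ (x - f x), p₂ (y - f y)⁆
        rw [hfD, sub_zero, LieHom.map_lie]
        refine aux_center E₂.γ E₂.central ?_ ?_ <;>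
        rw [map_sub, map_sub, hfN2, sub_zero] }
  have hψ : ∀ x, ψ x = p₂ (x - f x) := fun x => rfl
  have hψγ : ∀ x, E₂.γ (ψ x) = E₁.γ (p₁ x) := fun x => by
    rw [hψ, map_sub, map_sub, hfN2, sub_zero, hp]
  have hψ0 : ∀ x y, p₁ x = p₁ y → ψ x = ψ y := by
    intro x y h
    rw [← sub_eq_zero, ← map_sub, hψ, hfid _ (by rw [map_sub, h, sub_self]), sub_self, map_zero]
  choose s hs using hs₁
  let θ : E₁.T →ₗ⁅K⁆ E₂.T :=
    { toFun := fun a => ψ (s a)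
      map_add' := fun a b => by
        rw [← map_add]; apply hψ0; rw [map_add, hs, hs, hs]
      map_smul' := fun c a => by
        rw [RingHom.id_apply, ← map_smul]; apply hψ0; rw [map_smul, hs, hs]
      map_lie' := by
        intro a b
        change ψ (s ⁅a, b⁆) = ⁅ψ (s a), ψ (s b)⁆
        rw [← LieHom.map_lie]; apply hψ0; rw [LieHom.map_lie, hs, hs, hs] }
  have hθ : ∀ a, E₂.γ (θ a) = E₁.γ a := fun a => by
    change E₂.γ (ψ (s a)) = _
    rw [hψγ, hs]
  have hθd : ∀ z ∈ LieAlgebra.derivedSeries K E₂.T 1, ∃ a, θ a = z := by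
    intro z hz
    refine aux_derived_le (LinearMap.range (θ : E₁.T →ₗ[K] E₂.T)) ?_ hz
    intro x y
    obtain ⟨a, ha⟩ := E₁.surj (E₂.γ x)
    obtain ⟨b, hb⟩ := E₁.surj (E₂.γ y)
    refine ⟨⁅a, b⁆, ?_⟩
    change θ ⁅a, b⁆ = _
    rw [LieHom.map_lie]
    exact aux_center E₂.γ E₂.central (by rw [hθ, ha]) (by rw [hθ, hb])
  have hθs : Function.Surjective θ := by
    intro z
    obtain ⟨a, ha⟩ := E₁.surj (E₂.γ z)
    have hk : z - θ a ∈ E₂.γ.ker := by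
      rw [LieHom.mem_ker, map_sub, hθ, ha, sub_self]
    obtain ⟨b, hb⟩ := hθd _ (E₂.stem hk)
    exact ⟨b + a, by rw [map_add, hb, sub_add_cancel]⟩
  let t : E₁.γ.ker.toSubmodule →ₗ[K] E₂.γ.ker.toSubmodule :=
    ((θ : E₁.T →ₗ[K] E₂.T).comp E₁.γ.ker.toSubmodule.subtype).codRestrict _
      (fun b => (hθ b).trans b.2)
  have ht : Function.Surjective t := by
    rintro ⟨z, hz⟩
    obtain ⟨a, rfl⟩ := hθs z
    exact ⟨⟨a, (hθ a).symm.trans hz⟩, rfl⟩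
  have hfr : Module.finrank K E₁.γ.ker.toSubmodule = Module.finrank K E₂.γ.ker.toSubmodule :=
    congrArg Cardinal.toNat (le_antisymm (hmax₂ E₁) (hmax₁ E₂))
  have hti : Function.Injective t :=
    (LinearMap.injective_iff_surjective_of_finrank_eq_finrank hfr).2 ht
  have hθi : Function.Injective θ := by
    rw [injective_iff_map_eq_zero]
    intro a ha
    have hk : a ∈ E₁.γ.ker.toSubmodule := by
      change E₁.γ a = 0
      rw [← hθ, ha, map_zero]
    have : (⟨a, hk⟩ : E₁.γ.ker.toSubmodule) = 0 := hti (by rw [map_zero]; exact Subtype.ext ha)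
    exact congrArg Subtype.val this
  exact ⟨LieEquiv.ofBijective θ ⟨hθi, hθs⟩⟩
end
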